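/- arXiv:math/0110223 — 3 statements merged into one kernel-verified Lean document; each statement's English description precedes it below -/
import Mathlib

section
/- Let p be an odd prime, H a Hopf algebra over k of index p such that H is unimodular and H* is not unimodular, and ω ∈ k a primitive p-th root of unity. Let d be the common value of dim H^ω_{0,i,j} − dim H^ω_{1,i,j} over all i, j ∈ Z_p. Then the trace of the linear map S^{2p} on H equals p²·d (as an element of k). -/
open scoped TensorProduct

/-- A group-like element of a coalgebra: a nonzero element `a` with `Δ a = a ⊗ a`. -/
def IsGroupLike (k : Type*) {H : Type*} [CommSemiring k] [AddCommMonoid H] [Module k H]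
    [Coalgebra k H] (a : H) : Prop :=
  a ≠ 0 ∧ Coalgebra.comul (R := k) a = a ⊗ₜ[k] a

/-- The convolution product on the dual of a coalgebra. -/
noncomputable def conv {k H : Type*} [CommSemiring k] [AddCommMonoid H] [Module k H]
    [Coalgebra k H] (f g : Module.Dual k H) : Module.Dual k H :=
  LinearMap.mul' k k ∘ₗ TensorProduct.map f g ∘ₗ Coalgebra.comul

/-- `l ∈ H*` is a right integral of `H*`: `l * β = β(1) • l` for the convolution product. -/
def IsRightIntegralDual (k : Type*) {H : Type*} [CommSemiring k] [Semiring H]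
    [HopfAlgebra k H] (l : Module.Dual k H) : Prop :=
  ∀ f : Module.Dual k H, conv l f = f 1 • l

/-- `Λ ∈ H` is a left integral of `H`: `a * Λ = ε(a) • Λ` for all `a`. -/
def IsLeftIntegral (k : Type*) {H : Type*} [CommSemiring k] [Semiring H]
    [HopfAlgebra k H] (L : H) : Prop :=
  ∀ a : H, a * L = Coalgebra.counit (R := k) a • L

/-- `Λ ∈ H` is a right integral of `H`: `Λ * a = ε(a) • Λ` for all `a`. -/
def IsRightIntegral (k : Type*) {H : Type*} [CommSemiring k] [Semiring H]
    [HopfAlgebra k H] (L : H) : Prop :=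
  ∀ a : H, L * a = Coalgebra.counit (R := k) a • L

/-- `g` is the distinguished group-like element of `H`: it is group-like and
`β * λ = β(g) • λ` for some nonzero right integral `λ` of `H*`. -/
def IsDistinguishedGroupLike (k : Type*) {H : Type*} [CommSemiring k] [Semiring H]
    [HopfAlgebra k H] (g : H) : Prop :=
  IsGroupLike k g ∧ ∃ l : Module.Dual k H, l ≠ 0 ∧ IsRightIntegralDual k l ∧
    ∀ f : Module.Dual k H, conv f l = f g • l

/-- `α` is the distinguished group-like element of `H*`: an algebra map `H → k` with
`Λ * a = α(a) • Λ` for some nonzero left integral `Λ` of `H`. -/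
def IsDistinguishedGroupLikeDual (k : Type*) {H : Type*} [CommSemiring k] [Semiring H]
    [HopfAlgebra k H] (α : H →ₐ[k] k) : Prop :=
  ∃ L : H, L ≠ 0 ∧ IsLeftIntegral k L ∧ ∀ a : H, L * a = α a • L

/-- `IsHopfIndex k g n` : `n` is the index of the Hopf algebra `H` with distinguished
group-like element `g`, i.e. the smallest positive integer `n` with `S ^ (4 n) = id` and
`g ^ n = 1`, where `S` is the antipode. -/
def IsHopfIndex (k : Type*) {H : Type*} [CommSemiring k] [Semiring H] [HopfAlgebra k H]
    (g : H) (n : ℕ) : Prop :=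
  0 < n ∧ (HopfAlgebra.antipode (R := k) (A := H) : Module.End k H) ^ (4 * n) = 1 ∧ g ^ n = 1 ∧
    ∀ m : ℕ, 0 < m → (HopfAlgebra.antipode (R := k) (A := H) : Module.End k H) ^ (4 * m) = 1 →
      g ^ m = 1 → n ≤ m

/-- The simultaneous eigenspace `H^ω_{a,i,j} = {u ∈ H | S² u = (-1)^a ω^i • u, u * g = ω^j • u}`
for `(a,i,j) ∈ ℤ/2 × ℤ/n × ℤ/n`. -/
noncomputable def hopfEigenspace {k H : Type*} [CommRing k] [Ring H] [HopfAlgebra k H]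
    (g : H) (ω : k) {n : ℕ} (t : ZMod 2 × ZMod n × ZMod n) : Submodule k H :=
  Module.End.eigenspace ((HopfAlgebra.antipode (R := k) (A := H) : Module.End k H) ^ 2)
      ((-1 : k) ^ t.1.val * ω ^ t.2.1.val) ⊓
    Module.End.eigenspace (LinearMap.mulRight k g : Module.End k H) (ω ^ t.2.2.val)

/-- Convolution powers of an element of the dual; the zeroth power is the counit,
the unit of the convolution algebra. -/
noncomputable def convPow {k H : Type*} [CommSemiring k] [AddCommMonoid H] [Module k H]
    [Coalgebra k H] (f : Module.Dual k H) : ℕ → Module.Dual k H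
  | 0 => Coalgebra.counit
  | m + 1 => conv f (convPow f m)

/-!
Since `S ^ (4n) = 1`, the map `S ^ 2` is diagonalizable with eigenvalues among the `2n`-th roots
of unity `(-1) ^ a * ω ^ i`, whose `n`-th powers are the signs `(-1) ^ a` because `n` is odd. As
`S ^ 2` commutes with right multiplication by `g`, each of its eigenspaces splits further along the
eigenvalues `ω ^ j` of the latter, so `Tr (S ^ (2n))` is the signed sum of the dimensions of the
`H^ω_{a,i,j}`, and every one of the `n ^ 2` pairs `(i, j)` contributes `d`.
-/

section RootsOfUnity

open Finset Polynomial

variable {k ι : Type*} [Field k] [Fintype ι]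

/-- The family `c` lists, without repetition, all the `N`-th roots of unity of the field `k`, where
`N` is the size of the index type; there being `N` of them, `k` contains a primitive one. The index
type is left arbitrary so that it can be `ZMod 2 × ZMod n` for the `2n`-th roots of unity. -/
structure EnumeratesRootsOfUnity (c : ι → k) : Prop where
  injective : Function.Injective c
  pow_card_eq_one (i : ι) : c i ^ Fintype.card ι = 1

lemma EnumeratesRootsOfUnity.nodal_eq_X_pow_card_sub_one [Nonempty ι] {c : ι → k}
    (hc : EnumeratesRootsOfUnity c) :
    Lagrange.nodal univ c = X ^ Fintype.card ι - 1 := by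
  refine eq_of_degree_le_of_eval_index_eq univ hc.injective.injOn ?_ ?_ ?_ fun i hi ↦ ?_
  · rw [Lagrange.degree_nodal]
  · rw [Lagrange.degree_nodal, card_univ, ← C_1, degree_X_pow_sub_C Fintype.card_pos]
  · rw [Lagrange.nodal_monic, ← C_1, leadingCoeff_X_pow_sub_C Fintype.card_pos]
  · simp [Lagrange.eval_nodal_at_node hi, hc.pow_card_eq_one i]

variable {n : ℕ} {ω : k}

lemma enumeratesRootsOfUnity_pow_val [NeZero n] (hω : IsPrimitiveRoot ω n) :
    EnumeratesRootsOfUnity fun i : ZMod n ↦ ω ^ i.val where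
  injective _ _ h := ZMod.val_injective n (hω.pow_inj (ZMod.val_lt _) (ZMod.val_lt _) h)
  pow_card_eq_one i := by rw [ZMod.card, pow_right_comm, hω.pow_eq_one, one_pow]

lemma neg_one_pow_mul_pow_pow_of_odd {R : Type*} [CommRing R] {n : ℕ} (hn : Odd n) {ω : R}
    (hω : ω ^ n = 1) (a i : ℕ) :
    ((-1) ^ a * ω ^ i) ^ n = (-1) ^ a := by
  rw [mul_pow, pow_right_comm, hn.neg_one_pow, pow_right_comm, hω, one_pow, mul_one]

lemma neg_one_pow_val_injective {R : Type*} [Ring R] (h2 : (2 : R) ≠ 0) :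
    Function.Injective fun a : ZMod 2 ↦ (-1 : R) ^ a.val := by
  have hne : (1 : R) ≠ -1 := fun h ↦
    h2 (one_add_one_eq_two.symm.trans (eq_neg_iff_add_eq_zero.mp h))
  have hcases (a : ZMod 2) : a = 0 ∨ a = 1 := by decide +revert
  intro a b
  rcases hcases a with rfl | rfl <;> rcases hcases b with rfl | rfl <;>
    simp [ZMod.val_one, hne, hne.symm]

lemma sum_neg_one_pow_val_mul {R : Type*} [Ring R] (F : ZMod 2 → R) :
    ∑ a, (-1) ^ a.val * F a = F 0 - F 1 := by
  rw [show (univ : Finset (ZMod 2)) = {0, 1} from rfl, sum_pair zero_ne_one]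
  simp [ZMod.val_one, sub_eq_add_neg]

lemma enumeratesRootsOfUnity_neg_one_pow_mul_pow_val [NeZero n] (h2 : (2 : k) ≠ 0)
    (hn : Odd n) (hω : IsPrimitiveRoot ω n) :
    EnumeratesRootsOfUnity fun t : ZMod 2 × ZMod n ↦ (-1) ^ t.1.val * ω ^ t.2.val where
  injective := by
    rintro ⟨a, i⟩ ⟨b, j⟩ h
    have hpow := congrArg (· ^ n) h
    simp only [neg_one_pow_mul_pow_pow_of_odd hn hω.pow_eq_one] at hpow
    obtain rfl : a = b := neg_one_pow_val_injective h2 hpow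
    obtain rfl : i = j :=
      (enumeratesRootsOfUnity_pow_val hω).injective (mul_left_cancel₀ (by simp) h)
    rfl
  pow_card_eq_one t := by
    rw [Fintype.card_prod, ZMod.card, ZMod.card, mul_comm 2 n, pow_mul,
      neg_one_pow_mul_pow_pow_of_odd hn hω.pow_eq_one, pow_right_comm, neg_one_sq, one_pow]

end RootsOfUnity

section Eigenspaces

open Finset Module Module.End Polynomial

variable {k V ι : Type*} [Field k] [AddCommGroup V] [Module k V] [Fintype ι] {c : ι → k}

lemma aeval_basis_apply_mem_eigenspace [DecidableEq ι] {f : End k V}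
    (hf : aeval f (Lagrange.nodal univ c) = 0) (i : ι) (v : V) :
    aeval f (Lagrange.basis univ c i) v ∈ f.eigenspace (c i) := by
  have hmul : (X - C (c i)) * Lagrange.basis univ c i =
      C (Lagrange.nodalWeight univ c i) * Lagrange.nodal univ c := by
    rw [Lagrange.basis_eq_prod_sub_inv_mul_nodal_div (mem_univ i),
      ← Lagrange.nodal_erase_eq_nodal_div (mem_univ i),
      Lagrange.nodal_eq_mul_nodal_erase (mem_univ i)]
    ring
  have hzero := LinearMap.congr_fun (congrArg (aeval f) hmul) v
  simpa [hf, sub_eq_zero] using hzero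

lemma iSup_eigenspace_eq_top_of_aeval_nodal_eq_zero [Nonempty ι] {f : End k V}
    (hc : Function.Injective c) (hf : aeval f (Lagrange.nodal univ c) = 0) :
    ⨆ i, f.eigenspace (c i) = ⊤ := by
  classical
  refine eq_top_iff.mpr fun v _ ↦ ?_
  have hv : ∑ i, aeval f (Lagrange.basis univ c i) v = v := by
    rw [← LinearMap.sum_apply, ← map_sum, Lagrange.sum_basis hc.injOn univ_nonempty, map_one,
      one_apply]
  rw [← hv]
  exact sum_mem fun i _ ↦
    Submodule.mem_iSup_of_mem i (aeval_basis_apply_mem_eigenspace hf i v)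

lemma EnumeratesRootsOfUnity.isInternal_eigenspace [Nonempty ι] [DecidableEq ι]
    (hc : EnumeratesRootsOfUnity c) {f : End k V} (hf : f ^ Fintype.card ι = 1) :
    DirectSum.IsInternal fun i ↦ f.eigenspace (c i) :=
  DirectSum.isInternal_submodule_of_iSupIndep_of_iSup_eq_top
    (f.eigenspaces_iSupIndep.comp hc.injective)
    (iSup_eigenspace_eq_top_of_aeval_nodal_eq_zero hc.injective
      (by simp [hc.nodal_eq_X_pow_card_sub_one, hf]))

variable [FiniteDimensional k V]

lemma finrank_eq_sum_finrank_of_isInternal [DecidableEq ι] {N : ι → Submodule k V}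
    (hN : DirectSum.IsInternal N) : finrank k V = ∑ i, finrank k (N i) := by
  rw [← (LinearEquiv.ofBijective (DirectSum.coeLinearMap N) hN).finrank_eq, finrank_directSum]

lemma EnumeratesRootsOfUnity.finrank_eq_sum_finrank_inf_eigenspace [Nonempty ι]
    (hc : EnumeratesRootsOfUnity c) {g : End k V} (hg : g ^ Fintype.card ι = 1)
    {W : Submodule k V} (hW : ∀ x ∈ W, g x ∈ W) :
    finrank k W = ∑ i, finrank k ↥(W ⊓ g.eigenspace (c i)) := by
  classical
  have hres : g.restrict hW ^ Fintype.card ι = 1 := by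
    ext x
    simp [pow_restrict, hg]
  rw [finrank_eq_sum_finrank_of_isInternal (hc.isInternal_eigenspace hres)]
  refine sum_congr rfl fun i _ ↦ ?_
  rw [Submodule.inf_genEigenspace g W hW]
  exact (Submodule.finrank_map_subtype_eq W _).symm

lemma trace_pow_eq_sum_pow_mul_finrank_eigenspace [DecidableEq ι] {f : End k V}
    (hf : DirectSum.IsInternal fun i ↦ f.eigenspace (c i)) (m : ℕ) :
    LinearMap.trace k V (f ^ m) = ∑ i, c i ^ m * (finrank k (f.eigenspace (c i)) : k) := by
  have hmaps (i : ι) :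
      Set.MapsTo (f ^ m) (f.eigenspace (c i)) (f.eigenspace (c i)) :=
    mapsTo_genEigenspace_of_comm (Commute.self_pow f m) (c i) 1
  rw [LinearMap.trace_eq_sum_trace_restrict hf hmaps]
  refine sum_congr rfl fun i _ ↦ ?_
  have hscalar : (f ^ m).restrict (hmaps i) = c i ^ m • LinearMap.id := by
    rw [← pow_restrict m (mapsTo_genEigenspace_of_comm (Commute.refl f) (c i) 1),
      restrict_eigenspace, _root_.smul_pow, ← one_eq_id, one_pow]
  rw [hscalar, map_smul, LinearMap.trace_id, smul_eq_mul]

theorem trace_pow_eq_sum_pow_mul_finrank_eigenspace_inf_eigenspace {κ : Type*} [Fintype κ]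
    [Nonempty ι] [Nonempty κ] {b : κ → k} (hc : EnumeratesRootsOfUnity c)
    (hb : EnumeratesRootsOfUnity b) {f g : End k V} (hfg : Commute f g)
    (hf : f ^ Fintype.card ι = 1) (hg : g ^ Fintype.card κ = 1) (m : ℕ) :
    LinearMap.trace k V (f ^ m) =
      ∑ i, ∑ j, c i ^ m * (finrank k ↥(f.eigenspace (c i) ⊓ g.eigenspace (b j)) : k) := by
  classical
  rw [trace_pow_eq_sum_pow_mul_finrank_eigenspace (hc.isInternal_eigenspace hf)]
  refine sum_congr rfl fun i _ ↦ ?_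
  have hinv : ∀ x ∈ f.eigenspace (c i), g x ∈ f.eigenspace (c i) :=
    mapsTo_genEigenspace_of_comm hfg (c i) 1
  rw [hb.finrank_eq_sum_finrank_inf_eigenspace hg hinv, Nat.cast_sum, mul_sum]

end Eigenspaces

section HopfAlgebra

open Module

lemma IsGroupLike.isGroupLikeElem {k C : Type*} [Field k] [AddCommGroup C] [Module k C]
    [Coalgebra k C] {g : C} (hg : IsGroupLike k g) : IsGroupLikeElem k g := by
  refine ⟨?_, hg.2⟩
  have h := congrArg (TensorProduct.lid k C) (Coalgebra.rTensor_counit_comul (R := k) g)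
  simp only [hg.2, LinearMap.rTensor_tmul, TensorProduct.lid_tmul] at h
  exact smul_left_injective k hg.1 h

lemma commute_antipode_sq_mulRight {k H : Type*} [CommRing k] [Ring H] [HopfAlgebra k H] {g : H}
    (hg : IsGroupLikeElem k g) :
    Commute ((HopfAlgebra.antipode k : Module.End k H) ^ 2) (LinearMap.mulRight k g) := by
  ext u
  simp [pow_two, HopfAlgebra.antipode_mul_antidistrib, hg]

theorem trace_antipode_pow_eq_sum_finrank_hopfEigenspace {k H : Type*} [Field k] [Ring H]
    [HopfAlgebra k H] [FiniteDimensional k H] {g : H} {n : ℕ} [NeZero n] {ω : k}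
    (h2 : (2 : k) ≠ 0) (hn : Odd n) (hg : IsGroupLike k g)
    (hS : (HopfAlgebra.antipode k : Module.End k H) ^ (4 * n) = 1) (hgn : g ^ n = 1)
    (hω : IsPrimitiveRoot ω n) :
    LinearMap.trace k H ((HopfAlgebra.antipode k : Module.End k H) ^ (2 * n)) =
      ∑ t : ZMod 2 × ZMod n × ZMod n,
        (-1) ^ t.1.val * (finrank k (hopfEigenspace g ω t) : k) := by
  have hS' : ((HopfAlgebra.antipode k : Module.End k H) ^ 2) ^
      Fintype.card (ZMod 2 × ZMod n) = 1 := by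
    rw [Fintype.card_prod, ZMod.card, ZMod.card, ← pow_mul, ← mul_assoc]
    exact hS
  have hg' : LinearMap.mulRight k g ^ Fintype.card (ZMod n) = 1 := by
    rw [ZMod.card, LinearMap.pow_mulRight, hgn, LinearMap.mulRight_one]
    rfl
  rw [pow_mul, trace_pow_eq_sum_pow_mul_finrank_eigenspace_inf_eigenspace
    (enumeratesRootsOfUnity_neg_one_pow_mul_pow_val h2 hn hω) (enumeratesRootsOfUnity_pow_val hω)
    (commute_antipode_sq_mulRight hg.isGroupLikeElem) hS' hg']
  simp only [neg_one_pow_mul_pow_pow_of_odd hn hω.pow_eq_one, Fintype.sum_prod_type]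
  rfl

end HopfAlgebra

theorem stmt10_general {k H : Type*} [Field k] (h2 : (2 : k) ≠ 0) [Ring H] [HopfAlgebra k H]
    [FiniteDimensional k H] {n : ℕ} (hn : Odd n) {g : H} (hg : IsGroupLike k g)
    (hS : (HopfAlgebra.antipode (R := k) (A := H) : Module.End k H) ^ (4 * n) = 1)
    (hgn : g ^ n = 1) {ω : k} (hω : IsPrimitiveRoot ω n) {d : ℤ}
    (hd : ∀ i j : ZMod n,
      (Module.finrank k (hopfEigenspace g ω ((0 : ZMod 2), i, j)) : ℤ) -
        (Module.finrank k (hopfEigenspace g ω ((1 : ZMod 2), i, j)) : ℤ) = d) :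
    LinearMap.trace k H ((HopfAlgebra.antipode (R := k) (A := H) : Module.End k H) ^ (2 * n))
      = (n : k) ^ 2 * (d : k) := by
  have : NeZero n := ⟨hn.pos.ne'⟩
  have hsum (x : ZMod n × ZMod n) :
      ∑ a : ZMod 2, (-1) ^ a.val * (Module.finrank k (hopfEigenspace g ω (a, x)) : k) = d := by
    rw [sum_neg_one_pow_val_mul, ← hd x.1 x.2, Int.cast_sub, Int.cast_natCast, Int.cast_natCast]
  rw [trace_antipode_pow_eq_sum_finrank_hopfEigenspace h2 hn hg hS hgn hω,
    Fintype.sum_prod_type_right]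
  simp [hsum, pow_two]

/-- Lemma 5.7(ii). Let `p` be an odd prime, `H` a Hopf algebra of index `p`
over an algebraically closed field of characteristic `0` such that `H` is unimodular and `H*`
is not unimodular, `ω` a primitive `p`-th root of unity, and let `d` be the common value of
`dim H^ω_{0,i,j} − dim H^ω_{1,i,j}` over all `i, j ∈ ℤ/p`. Then `Tr(S^{2p}) = p² d` in `k`. -/
theorem stmt10 (k : Type*) [Field k] [IsAlgClosed k] [CharZero k]
    (p : ℕ) (hp : p.Prime) (hpodd : Odd p)
    (H : Type*) [Ring H] [HopfAlgebra k H] [FiniteDimensional k H]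
    (g : H) (hg : IsDistinguishedGroupLike k g) (hg1 : g ≠ 1) (hidx : IsHopfIndex k g p)
    (huni : IsDistinguishedGroupLikeDual k (Bialgebra.counitAlgHom k H))
    (ω : k) (hω : IsPrimitiveRoot ω p)
    (d : ℤ)
    (hd : ∀ i j : ZMod p,
      (Module.finrank k (hopfEigenspace g ω ((0 : ZMod 2), i, j)) : ℤ) -
        (Module.finrank k (hopfEigenspace g ω ((1 : ZMod 2), i, j)) : ℤ) = d) :
    LinearMap.trace k H ((HopfAlgebra.antipode (R := k) (A := H) : Module.End k H) ^ (2 * p))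
      = (p : k) ^ 2 * (d : k) :=
  stmt10_general two_ne_zero hpodd hg.1 hidx.2.1 hidx.2.2.1 hω hd
end

section
/- Let H be a Hopf algebra over k of odd index n, ω ∈ k a primitive n-th root of unity, g and α the distinguished group-like elements of H and H* respectively, and x an integer with α(g) = ω^x. Let Λ be a left integral of H. Then Δ(Λ) lies in the subspace Σ_{(a,i,j) ∈ Z_2 × Z_n × Z_n} H^ω_{(a,i,j)} ⊗ H^ω_{−(a,i,j)+(0,−x,x)} of H ⊗ H, where addition and negation of triples are taken in the group Z_2 × Z_n × Z_n. -/
open scoped TensorProduct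

/-!
Comparing `∑ S(a₁) a₂ Λ₁ ⊗ a₃ Λ₂` evaluated in two ways gives `S(a) Λ₁ ⊗ Λ₂ = Λ₁ ⊗ a Λ₂` for a
left integral `Λ`. Hence the legs of `Δ(Λ)` fill up `H`, a nonzero right integral `λ` of `H*`
satisfies `λ(Λ) ≠ 0`, and left integrals are unique up to scalars. The same identity yields
`λ(g b) = λ(S(b))`, from which `S²(Λ) = α(g)⁻¹ Λ`. Since also `Λ g = α(g) Λ`, the tensor `Δ(Λ)`
is an eigenvector of `S² ⊗ S²` with eigenvalue `α(g)⁻¹ = ω^(-x)` and of `R_g ⊗ R_g`, where `R_g` is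
right multiplication by `g`, with eigenvalue `α(g) = ω^x`. The operators `S²` and `R_g` commute
and are diagonalizable, with eigenvalues given by injective characters of `ℤ/2 × ℤ/n` (here `n`
odd enters) and `ℤ/n`. So `H ⊗ H` is the sum of the tensor products of pairs of joint eigenspaces,
and `Δ(Λ)` only involves the pairs whose eigenvalues have the right products.
-/

section Convolution

open Coalgebra HopfAlgebra WithConv
open Algebra.TensorProduct (includeLeft includeRight)
open scoped RingTheory.LinearMap

variable {k H : Type*} [CommSemiring k] [Semiring H] [HopfAlgebra k H]

theorem algHom_comp_antipode_convMul {A : Type*} [Semiring A] [Algebra k A] (f : H →ₐ[k] A) :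
    toConv (f.toLinearMap ∘ₗ antipode k) * toConv f.toLinearMap = 1 := by
  have h := LinearMap.algHom_comp_convMul_distrib f
    (toConv (antipode k (A := H))) (toConv LinearMap.id)
  rw [LinearMap.antipode_mul_id] at h
  calc _ = toConv (f.toLinearMap ∘ₗ (1 : WithConv (H →ₗ[k] H)).ofConv) := (congrArg toConv h).symm
    _ = 1 := by ext c; simp [LinearMap.convOne_def]

variable (k H) in
theorem includeLeft_convMul_includeRight :
    toConv (includeLeft (R := k) (S := k) (A := H) (B := H)).toLinearMap *
      toConv (includeRight (R := k) (A := H) (B := H)).toLinearMap = toConv comul := by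
  ext c
  rw [(ℛ k c).convMul_apply]
  simp [(ℛ k c).eq]

variable (k H) in
theorem includeLeft_comp_antipode_convMul_comul :
    toConv ((includeLeft (R := k) (S := k) (A := H) (B := H)).toLinearMap ∘ₗ antipode k) *
      toConv comul = toConv (includeRight (R := k) (A := H) (B := H)).toLinearMap := by
  rw [← includeLeft_convMul_includeRight, ← mul_assoc, algHom_comp_antipode_convMul, one_mul]

theorem comul_antipode (c : H) :
    comul (R := k) (antipode k c) =
      TensorProduct.map (antipode k) (antipode k) (TensorProduct.comm k H H (comul c)) := by
  have left_inv :
      (toConv ((includeRight (R := k) (A := H) (B := H)).toLinearMap ∘ₗ antipode k) *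
        toConv ((includeLeft (R := k) (S := k) (A := H) (B := H)).toLinearMap ∘ₗ antipode k)) *
        toConv comul = 1 := by
    rw [mul_assoc, includeLeft_comp_antipode_convMul_comul, algHom_comp_antipode_convMul]
  have h := left_inv_eq_right_inv left_inv (LinearMap.comul_right_inv (R := k) (C := H))
  calc comul (antipode k c) = (toConv (comul ∘ₗ antipode k (A := H))) c := rfl
    _ = TensorProduct.map (antipode k) (antipode k) (TensorProduct.comm k H H (comul c)) := by
      rw [← h, (ℛ k c).convMul_apply]
      conv_rhs => rw [← (ℛ k c).eq]
      simp

theorem comul_antipode_antipode (c : H) :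
    comul (R := k) (antipode k (antipode k c)) =
      TensorProduct.map (antipode k ∘ₗ antipode k) (antipode k ∘ₗ antipode k) (comul c) := by
  rw [comul_antipode, comul_antipode, ← (ℛ k c).eq]
  simp

/- Both sides come from `(S(a₁) ⊗ 1) Δ(a₂ L)`: once with `a₂ L = ε(a₂) L`, once with
`(S ⊗ 1) * Δ = 1 ⊗ id`. -/
theorem IsLeftIntegral.antipode_tmul_one_mul_comul {L : H} (hL : IsLeftIntegral k L) (a : H) :
    (antipode k a ⊗ₜ[k] (1 : H)) * comul L = ((1 : H) ⊗ₜ[k] a) * comul L := by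
  have comul_mul_comul (b : H) : comul (R := k) b * comul L = counit (R := k) b • comul L := by
    rw [← Bialgebra.comul_mul, hL, map_smul]
  have sum_counit :
      ∑ i ∈ (ℛ k a).index, counit (R := k) ((ℛ k a).right i) • (ℛ k a).left i = a := by
    simpa [-sum_tmul_counit_eq, map_sum] using
      congrArg (TensorProduct.rid k H) (sum_tmul_counit_eq (ℛ k a))
  have h := LinearMap.congr_fun (congrArg ofConv (includeLeft_comp_antipode_convMul_comul k H)) a
  rw [(ℛ k a).convMul_apply] at h
  symm
  calc ((1 : H) ⊗ₜ[k] a) * comul L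
      = ∑ i ∈ (ℛ k a).index, (antipode k ((ℛ k a).left i) ⊗ₜ[k] (1 : H)) *
          (comul ((ℛ k a).right i) * comul L) := by
        simp_rw [← mul_assoc, ← Finset.sum_mul]
        exact congrArg (· * comul L) h.symm
    _ = (antipode k (∑ i ∈ (ℛ k a).index,
          counit (R := k) ((ℛ k a).right i) • (ℛ k a).left i) ⊗ₜ[k] (1 : H)) * comul L := by
        simp only [comul_mul_comul, map_sum, map_smul, TensorProduct.sum_tmul, Finset.sum_mul,
          ← TensorProduct.smul_tmul', smul_mul_assoc, mul_smul_comm]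
    _ = (antipode k a ⊗ₜ[k] (1 : H)) * comul L := by rw [sum_counit]

end Convolution

section Contraction

open Coalgebra HopfAlgebra

variable {k M N : Type*} [CommSemiring k] [AddCommMonoid M] [Module k M] [AddCommMonoid N]
  [Module k N]

variable (k M N) in
/-- The contraction `l, u ⊗ v ↦ l(u) v` of the first tensor factor, as a bilinear map. At
`Δ(h)` it is the action `l, h ↦ ∑ l(h₁) h₂` of the dual on a coalgebra. -/
noncomputable def contractFst : Module.Dual k M →ₗ[k] M ⊗[k] N →ₗ[k] N :=
  LinearMap.llcomp k _ _ _ (TensorProduct.lid k N).toLinearMap ∘ₗ LinearMap.rTensorHom N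

variable (k M N) in
/-- The contraction `l, u ⊗ v ↦ l(v) u` of the second tensor factor, as a bilinear map. At
`Δ(h)` it is the action `l, h ↦ ∑ l(h₂) h₁` of the dual on a coalgebra. -/
noncomputable def contractSnd : Module.Dual k N →ₗ[k] M ⊗[k] N →ₗ[k] M :=
  LinearMap.llcomp k _ _ _ (TensorProduct.rid k M).toLinearMap ∘ₗ LinearMap.lTensorHom M

@[simp] theorem contractFst_tmul (l : Module.Dual k M) (u : M) (v : N) :
    contractFst k M N l (u ⊗ₜ[k] v) = l u • v := by simp [contractFst]

@[simp] theorem contractSnd_tmul (l : Module.Dual k N) (u : M) (v : N) :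
    contractSnd k M N l (u ⊗ₜ[k] v) = l v • u := by simp [contractSnd]

theorem apply_contractFst (l : Module.Dual k M) (m : Module.Dual k N) (z : M ⊗[k] N) :
    m (contractFst k M N l z) = l (contractSnd k M N m z) := by
  induction z with
  | zero => simp
  | tmul a b => simp [mul_comm]
  | add x y hx hy => simp [hx, hy]

theorem exists_sum_tmul_contractFst_eq {ι : Type*} (b : Module.Basis ι k M) (z : M ⊗[k] N) :
    ∃ s : Finset ι, ∑ i ∈ s, b i ⊗ₜ[k] contractFst k M N (b.coord i) z = z := by
  obtain ⟨c, rfl⟩ := TensorProduct.eq_repr_basis_left b z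
  have coord_eq (i : ι) :
      contractFst k M N (b.coord i) (c.sum fun j n => b j ⊗ₜ[k] n) = c i := by
    classical
    simp +contextual [Finsupp.sum, map_sum, Finsupp.single_apply, ite_smul]
  exact ⟨c.support, by simp_rw [coord_eq]; rfl⟩

theorem conv_apply [Coalgebra k M] (l m : Module.Dual k M) (h : M) :
    conv l m h = m (contractFst k M M l (comul h)) := by
  rw [conv, LinearMap.comp_apply, LinearMap.comp_apply]
  induction comul (R := k) h with
  | zero => simp
  | tmul a b => simp
  | add x y hx hy => simp only [map_add, hx, hy]

section Algebra

variable {A : Type*} [Semiring A] [Algebra k A] (l : Module.Dual k A) (a : A) (z : A ⊗[k] A)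

theorem contractFst_one_tmul_mul :
    contractFst k A A l ((1 ⊗ₜ[k] a) * z) = a * contractFst k A A l z := by
  induction z with
  | zero => simp
  | tmul u v => simp
  | add x y hx hy => simp [mul_add, hx, hy]

theorem contractFst_tmul_one_mul :
    contractFst k A A l ((a ⊗ₜ[k] 1) * z) =
      contractFst k A A (l ∘ₗ LinearMap.mulLeft k a) z := by
  induction z with
  | zero => simp
  | tmul u v => simp
  | add x y hx hy => simp [mul_add, hx, hy]

theorem contractSnd_tmul_one_mul :
    contractSnd k A A l ((a ⊗ₜ[k] 1) * z) = a * contractSnd k A A l z := by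
  induction z with
  | zero => simp
  | tmul u v => simp
  | add x y hx hy => simp [mul_add, hx, hy]

theorem contractSnd_one_tmul_mul :
    contractSnd k A A l ((1 ⊗ₜ[k] a) * z) =
      contractSnd k A A (l ∘ₗ LinearMap.mulLeft k a) z := by
  induction z with
  | zero => simp
  | tmul u v => simp
  | add x y hx hy => simp [mul_add, hx, hy]

end Algebra

section Field

variable {k M N : Type*} [Field k] [AddCommGroup M] [Module k M] [AddCommGroup N] [Module k N]

theorem finiteDimensional_range_contractFst_flip (z : M ⊗[k] N) :
    FiniteDimensional k (LinearMap.range ((contractFst k M N).flip z)) := by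
  classical
  let b := Module.Basis.ofVectorSpace k M
  obtain ⟨s, hs⟩ := exists_sum_tmul_contractFst_eq b z
  let F : Finset N := s.image fun i => contractFst k M N (b.coord i) z
  refine Submodule.finiteDimensional_of_le (S₂ := Submodule.span k (F : Set N)) ?_
  rintro _ ⟨l, rfl⟩
  rw [LinearMap.flip_apply]
  nth_rw 1 [← hs]
  simp only [map_sum, contractFst_tmul]
  exact Submodule.sum_smul_mem _ _ fun i hi =>
    Submodule.subset_span (Finset.mem_image_of_mem _ hi)

end Field

end Contraction

section Integral

open Coalgebra HopfAlgebra WithConv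
open scoped RingTheory.LinearMap

section CommSemiring

variable {k H : Type*} [CommSemiring k] [Semiring H] [HopfAlgebra k H]

theorem IsLeftIntegral.mul_contractFst_comul {L : H} (hL : IsLeftIntegral k L)
    (l : Module.Dual k H) (a : H) :
    a * contractFst k H H l (comul L) =
      contractFst k H H (l ∘ₗ LinearMap.mulLeft k (antipode k a)) (comul L) := by
  rw [← contractFst_one_tmul_mul, ← hL.antipode_tmul_one_mul_comul, contractFst_tmul_one_mul]

theorem IsLeftIntegral.antipode_antipode
    (hS : Function.Surjective (antipode k (A := H))) {L : H} (hL : IsLeftIntegral k L) :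
    IsLeftIntegral k (antipode k (antipode k L)) := fun a => by
  obtain ⟨b, rfl⟩ := hS a
  obtain ⟨c, rfl⟩ := hS b
  rw [← antipode_mul_antidistrib, ← antipode_mul_antidistrib, hL, map_smul, map_smul,
    counit_antipode, counit_antipode]

theorem antipode_sq_commute_mulRight {g : H} (hg : IsGroupLikeElem k g) :
    Commute ((antipode k : Module.End k H) ^ 2) (LinearMap.mulRight k g) := by
  ext u
  simp [pow_two, antipode_mul_antidistrib, hg.antipode_antipode]

theorem map_mulRight_comul {g : H} (hg : IsGroupLikeElem k g) (h : H) :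
    TensorProduct.map (LinearMap.mulRight k g) (LinearMap.mulRight k g) (comul h) =
      comul (R := k) (h * g) := by
  rw [Bialgebra.comul_mul, hg.comul_eq_tmul_self]
  induction comul (R := k) h with
  | zero => simp
  | tmul u v => simp
  | add x y hx hy => simp only [map_add, add_mul, hx, hy]

end CommSemiring

section CommRing

variable {k H : Type*} [CommRing k] [Ring H] [HopfAlgebra k H]

theorem IsLeftIntegral.sub_smul {L M : H} (hL : IsLeftIntegral k L) (hM : IsLeftIntegral k M)
    (c : k) : IsLeftIntegral k (M - c • L) := fun a => by
  rw [mul_sub, mul_smul_comm, hL, hM, smul_sub, smul_comm]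

section Projective

variable [Module.Projective k H]

theorem IsRightIntegralDual.contractFst_comul {l : Module.Dual k H}
    (hl : IsRightIntegralDual k l) (h : H) : contractFst k H H l (comul h) = l h • (1 : H) := by
  rw [← sub_eq_zero, ← Module.forall_dual_apply_eq_zero_iff k]
  intro f
  rw [map_sub, ← conv_apply, hl f, map_smul, LinearMap.smul_apply, smul_eq_mul, smul_eq_mul,
    mul_comm, sub_self]

theorem contractSnd_comul_of_conv_eq_smul {l : Module.Dual k H} {g : H}
    (hlg : ∀ f : Module.Dual k H, conv f l = f g • l) (h : H) :
    contractSnd k H H l (comul h) = l h • g := by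
  rw [← sub_eq_zero, ← Module.forall_dual_apply_eq_zero_iff k]
  intro f
  rw [map_sub, ← apply_contractFst, ← conv_apply, hlg f, map_smul, LinearMap.smul_apply,
    smul_eq_mul, smul_eq_mul, mul_comm, sub_self]

theorem contractSnd_comp_mulLeft_comul_of_conv_eq_smul {l : Module.Dual k H} {g : H}
    (hg : IsGroupLikeElem k g) (hlg : ∀ f : Module.Dual k H, conv f l = f g • l) (h : H) :
    contractSnd k H H (l ∘ₗ LinearMap.mulLeft k g) (comul h) = l (g * h) • (1 : H) := by
  have g_mul : g * contractSnd k H H (l ∘ₗ LinearMap.mulLeft k g) (comul h) = l (g * h) • g := by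
    rw [← contractSnd_comul_of_conv_eq_smul hlg, Bialgebra.comul_mul, hg.comul_eq_tmul_self,
      ← contractSnd_one_tmul_mul, ← contractSnd_tmul_one_mul, ← mul_assoc,
      Algebra.TensorProduct.tmul_mul_tmul, one_mul, mul_one]
  calc contractSnd k H H (l ∘ₗ LinearMap.mulLeft k g) (comul h)
      = antipode k g * (g * contractSnd k H H (l ∘ₗ LinearMap.mulLeft k g) (comul h)) := by
        rw [← mul_assoc, hg.antipode_mul_cancel, one_mul]
    _ = l (g * h) • (1 : H) := by rw [g_mul, mul_smul_comm, hg.antipode_mul_cancel]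

theorem IsRightIntegralDual.contractFst_antipode_tmul_one_mul_comul {l : Module.Dual k H}
    (hl : IsRightIntegralDual k l) {L : H} (hL : IsLeftIntegral k L) (a : H) :
    contractFst k H H l ((antipode k a ⊗ₜ[k] 1) * comul L) = l L • a := by
  rw [hL.antipode_tmul_one_mul_comul, contractFst_one_tmul_mul, hl.contractFst_comul,
    mul_smul_comm, mul_one]

end Projective

end CommRing

variable {k H : Type*} [Field k] [Ring H] [HopfAlgebra k H]

theorem IsGroupLike.isGroupLikeElem_s11 {g : H} (hg : IsGroupLike k g) : IsGroupLikeElem k g where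
  counit_eq_one := by
    have h := congrArg (TensorProduct.lid k H) (rTensor_counit_comul (R := k) g)
    rw [hg.2] at h
    simp only [LinearMap.rTensor_tmul, TensorProduct.lid_tmul, one_smul] at h
    exact smul_left_injective k hg.1 (by simpa using h)
  comul_eq_tmul_self := hg.2

/- The range is a left ideal, and it contains `f(L) 1 = ∑ f(L₁) S(L₂) L₃` for every functional
`f`. -/
theorem IsLeftIntegral.range_contractFst_comul_eq_top {L : H} (hL : IsLeftIntegral k L)
    (hL0 : L ≠ 0) : LinearMap.range ((contractFst k H H).flip (comul L)) = ⊤ := by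
  set V := LinearMap.range ((contractFst k H H).flip (comul L))
  have mul_mem (a : H) {v : H} (hv : v ∈ V) : a * v ∈ V := by
    obtain ⟨l, rfl⟩ := hv
    exact ⟨_, (hL.mul_contractFst_comul l a).symm⟩
  suffices one_mem : (1 : H) ∈ V from
    Submodule.eq_top_iff'.2 fun a => by simpa using mul_mem a one_mem
  obtain ⟨f, hf⟩ : ∃ f : Module.Dual k H, f L = 1 := Module.Projective.exists_dual_eq_one k hL0
  obtain ⟨s, hs⟩ := exists_sum_tmul_contractFst_eq (Module.Basis.ofVectorSpace k H)
    (comul (R := k) L)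
  let F : WithConv (H →ₗ[k] H) := toConv (Algebra.linearMap k H ∘ₗ f)
  have conv_eq : F * toConv (antipode k) * toConv LinearMap.id = F := by
    rw [mul_assoc, LinearMap.antipode_mul_id, mul_one]
  let r : Coalgebra.Repr k L _ := ⟨s, _, _, hs⟩
  have h := LinearMap.congr_fun (congrArg ofConv conv_eq) L
  rw [r.convMul_apply] at h
  have hFL : F L = 1 := by simp [F, hf]
  rw [← hFL]
  exact h ▸ V.sum_mem fun i _ => mul_mem _ ⟨_, rfl⟩

theorem IsLeftIntegral.finiteDimensional {L : H} (hL : IsLeftIntegral k L) (hL0 : L ≠ 0) :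
    FiniteDimensional k H := by
  have := finiteDimensional_range_contractFst_flip (comul (R := k) L)
  rw [hL.range_contractFst_comul_eq_top hL0] at this
  exact Module.Finite.equiv Submodule.topEquiv

theorem IsLeftIntegral.injective_contractFst_comul {L : H} (hL : IsLeftIntegral k L)
    (hL0 : L ≠ 0) : Function.Injective ((contractFst k H H).flip (comul L)) := by
  have := hL.finiteDimensional hL0
  rw [LinearMap.injective_iff_surjective_of_finrank_eq_finrank Subspace.dual_finrank_eq]
  exact LinearMap.range_eq_top.1 (hL.range_contractFst_comul_eq_top hL0)

theorem IsRightIntegralDual.apply_ne_zero {l : Module.Dual k H} (hl : IsRightIntegralDual k l)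
    (hl0 : l ≠ 0) {L : H} (hL : IsLeftIntegral k L) (hL0 : L ≠ 0) : l L ≠ 0 := by
  intro h
  refine hl0 (hL.injective_contractFst_comul hL0 ?_)
  rw [LinearMap.flip_apply, hl.contractFst_comul, h, zero_smul, map_zero]

theorem IsLeftIntegral.eq_smul {l : Module.Dual k H} (hl : IsRightIntegralDual k l) (hl0 : l ≠ 0)
    {L M : H} (hL : IsLeftIntegral k L) (hL0 : L ≠ 0) (hM : IsLeftIntegral k M) :
    M = (l M / l L) • L := by
  by_contra hne
  refine hl.apply_ne_zero hl0 (hL.sub_smul hM _) (sub_ne_zero.2 hne) ?_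
  rw [map_sub, map_smul, smul_eq_mul, div_mul_cancel₀ _ (hl.apply_ne_zero hl0 hL hL0), sub_self]

theorem IsRightIntegralDual.antipode_surjective {l : Module.Dual k H}
    (hl : IsRightIntegralDual k l) (hl0 : l ≠ 0) {L : H} (hL : IsLeftIntegral k L)
    (hL0 : L ≠ 0) : Function.Surjective (antipode k (A := H)) := by
  have := hL.finiteDimensional hL0
  refine LinearMap.injective_iff_surjective.1 ((injective_iff_map_eq_zero _).2 fun a ha => ?_)
  have h := hl.contractFst_antipode_tmul_one_mul_comul hL a
  rw [ha, TensorProduct.zero_tmul, zero_mul, map_zero, eq_comm] at h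
  exact (smul_eq_zero_iff_right (hl.apply_ne_zero hl0 hL hL0)).1 h

theorem IsRightIntegralDual.apply_mul_eq_apply_antipode {l : Module.Dual k H}
    (hl : IsRightIntegralDual k l) (hl0 : l ≠ 0) {g : H} (hg : IsGroupLikeElem k g)
    (hlg : ∀ f : Module.Dual k H, conv f l = f g • l) {L : H} (hL : IsLeftIntegral k L)
    (hL0 : L ≠ 0) (b : H) : l (g * b) = l (antipode k b) := by
  refine mul_left_cancel₀ (hl.apply_ne_zero hl0 hL hL0) ?_
  calc l L * l (g * b)
      = (l ∘ₗ LinearMap.mulLeft k g)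
          (contractFst k H H l ((antipode k b ⊗ₜ[k] 1) * comul L)) := by
        rw [hl.contractFst_antipode_tmul_one_mul_comul hL, map_smul]; rfl
    _ = l (antipode k b *
          contractSnd k H H (l ∘ₗ LinearMap.mulLeft k g) (comul L)) := by
        rw [apply_contractFst, contractSnd_tmul_one_mul]
    _ = l L * l (antipode k b) := by
        rw [contractSnd_comp_mulLeft_comul_of_conv_eq_smul hg hlg, hL, hg.counit_eq_one,
          one_smul, mul_smul_comm, mul_one, map_smul, smul_eq_mul]

theorem IsDistinguishedGroupLikeDual.mul_eq_smul {α : H →ₐ[k] k}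
    (hα : IsDistinguishedGroupLikeDual k α) {g : H} (hg : IsDistinguishedGroupLike k g) {L : H}
    (hL : IsLeftIntegral k L) (a : H) : L * a = α a • L := by
  obtain ⟨-, l, hl0, hl, -⟩ := hg
  obtain ⟨M, hM0, hM, hMα⟩ := hα
  rw [hM.eq_smul hl hl0 hM0 hL, smul_mul_assoc, hMα, smul_comm]

/- `S²(L) = c L` by uniqueness of integrals, and `c` is found by applying the right integral `l` of
the dual: `l(S²(L)) = l(g S(L)) = l(S(L S(g))) = α(g)⁻¹ l(S(L))` and `l(S(L)) = l(g L) = l(L)`. -/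
theorem IsLeftIntegral.antipode_antipode_eq_smul {g : H} (hg : IsDistinguishedGroupLike k g)
    {α : H →ₐ[k] k} {L : H} (hL : IsLeftIntegral k L) (hα : ∀ a : H, L * a = α a • L) :
    antipode k (antipode k L) = (α g)⁻¹ • L := by
  rcases eq_or_ne L 0 with rfl | hL0
  · simp
  obtain ⟨hgl, l, hl0, hl, hlg⟩ := hg
  have hg := hgl.isGroupLikeElem_s11
  have hS := hl.antipode_surjective hl0 hL hL0
  have apply_mul := hl.apply_mul_eq_apply_antipode hl0 hg hlg hL hL0
  have apply_antipode : l (antipode k L) = l L := by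
    rw [← apply_mul, hL, hg.counit_eq_one, one_smul]
  have map_antipode : α (antipode k g) = (α g)⁻¹ := by
    refine eq_inv_of_mul_eq_one_left ?_
    rw [← map_mul, hg.antipode_mul_cancel, map_one]
  have mul_antipode : g * antipode k L = (α g)⁻¹ • antipode k L := by
    calc g * antipode k L = antipode k (L * antipode k g) := by
          rw [antipode_mul_antidistrib, hg.antipode_antipode]
      _ = (α g)⁻¹ • antipode k L := by rw [hα, map_smul, map_antipode]
  rw [hL.eq_smul hl hl0 hL0 (hL.antipode_antipode hS), ← apply_mul, mul_antipode, map_smul,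
    apply_antipode, smul_eq_mul, mul_div_cancel_right₀ _ (hl.apply_ne_zero hl0 hL hL0)]

theorem IsLeftIntegral.map_antipode_sq_comul {g : H} (hg : IsDistinguishedGroupLike k g)
    {α : H →ₐ[k] k} {L : H} (hL : IsLeftIntegral k L) (hα : ∀ a : H, L * a = α a • L) :
    TensorProduct.map ((antipode k : Module.End k H) ^ 2) ((antipode k : Module.End k H) ^ 2)
      (comul L) = (α g)⁻¹ • comul (R := k) L := by
  rw [← map_smul, ← hL.antipode_antipode_eq_smul hg hα, comul_antipode_antipode, pow_two]
  rfl

end Integral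

section Eigenspace

open Polynomial Module.End

variable {k V : Type*} [Field k] [AddCommGroup V] [Module k V]

theorem aeval_lagrangeBasis_apply_mem_eigenspace {ι : Type*} [DecidableEq ι] {s : Finset ι}
    {v : ι → k} {f : Module.End k V} (hf : aeval f (Lagrange.nodal s v) = 0) {i : ι} (hi : i ∈ s)
    (x : V) : aeval f (Lagrange.basis s v i) x ∈ f.eigenspace (v i) := by
  have basis_eq : (X - C (v i)) * Lagrange.basis s v i =
      C (Lagrange.nodalWeight s v i) * Lagrange.nodal s v := by
    rw [Lagrange.basis_eq_prod_sub_inv_mul_nodal_div hi, ← Lagrange.nodal_erase_eq_nodal_div hi,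
      mul_left_comm, ← Lagrange.nodal_eq_mul_nodal_erase hi]
  have h := congrArg (aeval f) basis_eq
  rw [map_mul, map_mul, hf, mul_zero, map_sub, aeval_X, aeval_C] at h
  rw [mem_eigenspace_iff, ← sub_eq_zero]
  exact LinearMap.congr_fun h x

theorem le_iSup_inf_eigenspace_of_aeval_nodal_eq_zero {ι : Type*} {s : Finset ι} (hs : s.Nonempty)
    {v : ι → k} (hv : Set.InjOn v s) {f : Module.End k V}
    (hf : aeval f (Lagrange.nodal s v) = 0) {p : Submodule k V} (hp : p ≤ p.comap f) :
    p ≤ ⨆ i ∈ s, p ⊓ f.eigenspace (v i) := by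
  classical
  intro x hx
  have sum_basis : ∑ i ∈ s, aeval f (Lagrange.basis s v i) x = x := by
    rw [← LinearMap.sum_apply, ← map_sum, Lagrange.sum_basis hv hs, map_one, Module.End.one_apply]
  rw [← sum_basis]
  refine Submodule.sum_mem _ fun i hi => Submodule.mem_iSup_of_mem i <|
    Submodule.mem_iSup_of_mem hi ⟨?_, aeval_lagrangeBasis_apply_mem_eigenspace hf hi x⟩
  exact aeval_apply_smul_mem_of_le_comap' hx _ f hp

theorem mem_iSup_of_mem_eigenspace {ι : Type*} {f : Module.End k V} {μ : ι → k}
    {p : ι → Submodule k V} (hp : ∀ i, p i ≤ f.eigenspace (μ i)) {c : k} {z : V}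
    (hz : z ∈ ⨆ i, p i) (hzc : z ∈ f.eigenspace c) : z ∈ ⨆ i, ⨆ (_ : μ i = c), p i := by
  rw [iSup_split p fun i => μ i = c] at hz
  obtain ⟨y, hy, w, hw, rfl⟩ := Submodule.mem_sup.1 hz
  have hyc : y ∈ f.eigenspace c :=
    (iSup₂_le fun i hi => (hp i).trans_eq (congrArg f.eigenspace hi) :
      ⨆ i, ⨆ (_ : μ i = c), p i ≤ f.eigenspace c) hy
  have hwc : w ∈ f.eigenspace c := by simpa using sub_mem hzc hyc
  have hw' : w ∈ ⨆ (ν) (_ : ν ≠ c), f.eigenspace ν :=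
    (iSup₂_le fun i hi => (hp i).trans (le_iSup₂_of_le (μ i) hi le_rfl) :
      ⨆ i, ⨆ (_ : ¬μ i = c), p i ≤ _) hw
  rwa [Submodule.disjoint_def.1 (f.eigenspaces_iSupIndep c) w hwc hw', add_zero]

end Eigenspace

section TensorProduct

open Module.End

variable {k V W : Type*} [CommRing k] [AddCommGroup V] [Module k V] [AddCommGroup W] [Module k W]

theorem range_mapIncl_le_eigenspace_map {f : Module.End k V} {g : Module.End k W} {a b : k}
    {p : Submodule k V} {q : Submodule k W} (hp : p ≤ f.eigenspace a) (hq : q ≤ g.eigenspace b) :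
    LinearMap.range (TensorProduct.mapIncl p q) ≤
      eigenspace (TensorProduct.map f g : Module.End k (V ⊗[k] W)) (a * b) := by
  rw [TensorProduct.range_mapIncl, Submodule.map₂_le]
  intro u hu v hv
  rw [TensorProduct.mk_apply, mem_eigenspace_iff, TensorProduct.map_tmul,
    mem_eigenspace_iff.1 (hp hu), mem_eigenspace_iff.1 (hq hv), TensorProduct.smul_tmul_smul]

theorem iSup_range_mapIncl_eq_top {ι κ : Type*} {p : ι → Submodule k V} {q : κ → Submodule k W}
    (hp : ⨆ i, p i = ⊤) (hq : ⨆ j, q j = ⊤) :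
    ⨆ i, ⨆ j, LinearMap.range (TensorProduct.mapIncl (p i) (q j)) = ⊤ := by
  simp_rw [TensorProduct.range_mapIncl, ← Submodule.map₂_iSup_right, ← Submodule.map₂_iSup_left,
    hp, hq]
  exact TensorProduct.map₂_mk_top_top_eq_top k V W

end TensorProduct

section Character

open Polynomial

theorem nodal_univ_addChar {G k : Type*} [AddGroup G] [Fintype G] [CommRing k] [IsDomain k]
    {χ : AddChar G k} (hχ : Function.Injective χ) :
    Lagrange.nodal Finset.univ χ = X ^ Fintype.card G - 1 := by
  have h : degree (1 : k[X]) < degree ((X : k[X]) ^ Fintype.card G) := by simp [Fintype.card_pos]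
  refine eq_of_degree_le_of_eval_index_eq Finset.univ hχ.injOn ?_ ?_ ?_ ?_
  · exact Lagrange.degree_nodal.le
  · rw [degree_sub_eq_left_of_degree_lt h, Lagrange.degree_nodal, Finset.card_univ, degree_X_pow]
  · rw [Lagrange.nodal_monic, leadingCoeff_sub_of_degree_lt h, monic_X_pow]
  · intro t ht
    rw [Lagrange.eval_nodal_at_node ht]
    simp [← AddChar.map_nsmul_eq_pow]

/-- The character `(s, t) ↦ χ(s) ψ(t)` of `G₁ × G₂`; the eigenvalues `(-1)^a ω^i` of `S²` are the
values of such a character of `ℤ/2 × ℤ/n`. -/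
def coprodChar {G₁ G₂ k : Type*} [AddMonoid G₁] [AddMonoid G₂] [CommMonoid k]
    (χ : AddChar G₁ k) (ψ : AddChar G₂ k) : AddChar (G₁ × G₂) k :=
  χ.compAddMonoidHom (AddMonoidHom.fst G₁ G₂) * ψ.compAddMonoidHom (AddMonoidHom.snd G₁ G₂)

theorem coprodChar_apply {G₁ G₂ k : Type*} [AddMonoid G₁] [AddMonoid G₂] [CommMonoid k]
    (χ : AddChar G₁ k) (ψ : AddChar G₂ k) (t : G₁ × G₂) :
    coprodChar χ ψ t = χ t.1 * ψ t.2 := rfl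

theorem coprodChar_injective {G₁ G₂ k : Type*} [AddCommGroup G₁] [AddCommGroup G₂] [Fintype G₁]
    [Fintype G₂] [DivisionCommMonoid k] (h : (Fintype.card G₁).Coprime (Fintype.card G₂))
    {χ : AddChar G₁ k} {ψ : AddChar G₂ k} (hχ : Function.Injective χ)
    (hψ : Function.Injective ψ) : Function.Injective (coprodChar χ ψ) := by
  rw [AddChar.injective_iff] at *
  rintro ⟨s, t⟩ hst
  rw [coprodChar_apply] at hst
  have hs : Fintype.card G₂ • s = 0 := hχ <| by
    simpa [mul_pow, ← AddChar.map_nsmul_eq_pow] using congrArg (· ^ Fintype.card G₂) hst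
  have hs0 : s = 0 := by
    rw [← AddMonoid.addOrderOf_eq_one_iff]
    exact Nat.eq_one_of_dvd_coprimes h addOrderOf_dvd_card (addOrderOf_dvd_of_nsmul_eq_zero hs)
  subst hs0
  exact Prod.ext rfl (hψ (by simpa using hst))

theorem zmodChar_injective {k : Type*} [CommMonoid k] {n : ℕ} [NeZero n] {ζ : k}
    (hζ : IsPrimitiveRoot ζ n) : Function.Injective (AddChar.zmodChar n hζ.pow_eq_one) :=
  fun a b h => ZMod.val_injective n (hζ.pow_inj a.val_lt b.val_lt h)

theorem zmodChar_intCast {k : Type*} [DivisionCommMonoid k] {n : ℕ} [NeZero n] {ζ : k}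
    (hζ : ζ ^ n = 1) (x : ℤ) : AddChar.zmodChar n hζ x = ζ ^ x := by
  have zmodChar_one : AddChar.zmodChar n hζ 1 = ζ := by
    simpa using AddChar.zmodChar_apply' hζ 1
  rw [← zsmul_one, AddChar.map_zsmul_eq_zpow, zmodChar_one]

theorem isPrimitiveRoot_neg_one {k : Type*} [CommRing k] [NeZero (2 : k)] :
    IsPrimitiveRoot (-1 : k) 2 := by
  refine IsPrimitiveRoot.mk_of_lt _ two_pos neg_one_sq fun l hl hl2 h => ?_
  obtain rfl : l = 1 := by lia
  refine two_ne_zero (α := k) ?_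
  linear_combination -h

end Character

section JointEigenspace

open Module.End

variable {k V G₁ G₂ : Type*} [Field k] [AddCommGroup V] [Module k V]

/-- The subspace on which the operators `f` and `g` act by the scalars `χ(t₁)` and `ψ(t₂)`. For
`f = S²` and `g` the right multiplication by the distinguished group-like element this is
`hopfEigenspace`, with indices in `(ℤ/2 × ℤ/n) × ℤ/n`. -/
def jointEigenspace (f g : Module.End k V) (χ : G₁ → k) (ψ : G₂ → k) (t : G₁ × G₂) :
    Submodule k V :=
  f.eigenspace (χ t.1) ⊓ g.eigenspace (ψ t.2)

variable [AddCommGroup G₁] [Fintype G₁] [AddCommGroup G₂] [Fintype G₂]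
  {χ : AddChar G₁ k} (hχ : Function.Injective χ) {ψ : AddChar G₂ k} (hψ : Function.Injective ψ)
  {f g : Module.End k V} (hf : f ^ Fintype.card G₁ = 1) (hg : g ^ Fintype.card G₂ = 1)

include hχ hf in
theorem le_iSup_inf_eigenspace_addChar {p : Submodule k V} (hp : p ≤ p.comap f) :
    p ≤ ⨆ t, p ⊓ f.eigenspace (χ t) := by
  simpa using le_iSup_inf_eigenspace_of_aeval_nodal_eq_zero Finset.univ_nonempty hχ.injOn
    (by simp [nodal_univ_addChar hχ, hf]) hp

include hχ hψ hf hg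

theorem iSup_jointEigenspace_eq_top (hfg : Commute f g) :
    ⨆ t, jointEigenspace f g χ ψ t = ⊤ := by
  rw [iSup_prod, eq_top_iff]
  calc ⊤ ≤ ⨆ s, ⊤ ⊓ f.eigenspace (χ s) := le_iSup_inf_eigenspace_addChar hχ hf le_top
    _ = ⨆ s, f.eigenspace (χ s) := by simp only [top_inf_eq]
    _ ≤ ⨆ s, ⨆ t, jointEigenspace f g χ ψ (s, t) := iSup_mono fun s =>
      le_iSup_inf_eigenspace_addChar hψ hg (mapsTo_genEigenspace_of_comm hfg _ _)

/- The sum of all `E t ⊗ E s` is everything, and the two operators single out the summands with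
`χ(t₁) χ(s₁) = χ(c₁)` and `ψ(t₂) ψ(s₂) = ψ(c₂)`, that is, `s = -t + c`. -/
theorem mem_iSup_range_mapIncl_jointEigenspace (hfg : Commute f g) {c : G₁ × G₂} {z : V ⊗[k] V}
    (hfz : TensorProduct.map f f z = χ c.1 • z) (hgz : TensorProduct.map g g z = ψ c.2 • z) :
    z ∈ ⨆ t, LinearMap.range (TensorProduct.mapIncl (jointEigenspace f g χ ψ t)
      (jointEigenspace f g χ ψ (-t + c))) := by
  have htop := iSup_jointEigenspace_eq_top hχ hψ hf hg hfg
  have hz : z ∈ ⨆ i : (G₁ × G₂) × (G₁ × G₂), LinearMap.range (TensorProduct.mapIncl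
      (jointEigenspace f g χ ψ i.1) (jointEigenspace f g χ ψ i.2)) := by
    rw [iSup_prod, iSup_range_mapIncl_eq_top htop htop]
    exact Submodule.mem_top
  have hz₁ := mem_iSup_of_mem_eigenspace
    (fun i => range_mapIncl_le_eigenspace_map inf_le_left inf_le_left) hz (mem_eigenspace_iff.2 hfz)
  have hz₂ := mem_iSup_of_mem_eigenspace
    (fun i => (iSup_le fun _ => range_mapIncl_le_eigenspace_map inf_le_right inf_le_right))
    hz₁ (mem_eigenspace_iff.2 hgz)
  refine SetLike.le_def.1 ?_ hz₂
  refine iSup_le fun ⟨t, s⟩ => iSup₂_le fun h₂ h₁ => ?_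
  rw [← AddChar.map_add_eq_mul] at h₁ h₂
  obtain rfl : s = -t + c := by
    rw [eq_neg_add_iff_add_eq]
    exact Prod.ext (hχ h₁) (hψ h₂)
  exact le_iSup (fun t => LinearMap.range (TensorProduct.mapIncl (jointEigenspace f g χ ψ t)
    (jointEigenspace f g χ ψ (-t + c)))) t

end JointEigenspace

section Main

open Coalgebra HopfAlgebra

theorem stmt11_general (k : Type*) [Field k] [NeZero (2 : k)] (n : ℕ) (hn : Odd n)
    (H : Type*) [Ring H] [HopfAlgebra k H] (g : H) (hg : IsDistinguishedGroupLike k g)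
    (hS : (antipode k : Module.End k H) ^ (4 * n) = 1) (hgn : g ^ n = 1)
    (α : H →ₐ[k] k) (hα : IsDistinguishedGroupLikeDual k α)
    (ω : k) (hω : IsPrimitiveRoot ω n) (x : ℤ) (hx : α g = ω ^ x)
    (Λ : H) (hΛ : IsLeftIntegral k Λ) :
    comul (R := k) Λ ∈
      ⨆ t : ZMod 2 × ZMod n × ZMod n,
        LinearMap.range (TensorProduct.mapIncl (hopfEigenspace g ω t)
          (hopfEigenspace g ω
            (-t + ((0 : ZMod 2), ((-x : ℤ) : ZMod n), ((x : ℤ) : ZMod n))))) := by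
  have : NeZero n := ⟨hn.pos.ne'⟩
  have hgl := hg.1.isGroupLikeElem_s11
  have hΛα := hα.mul_eq_smul hg hΛ
  let ψ := AddChar.zmodChar n hω.pow_eq_one
  let χ := coprodChar (AddChar.zmodChar 2 (neg_one_sq (R := k))) ψ
  have hψ : Function.Injective ψ := zmodChar_injective hω
  have hχ : Function.Injective χ :=
    coprodChar_injective (by simpa) (zmodChar_injective isPrimitiveRoot_neg_one) hψ
  have hψx (y : ℤ) : ψ y = ω ^ y := zmodChar_intCast hω.pow_eq_one y
  have hχx : χ (0, ((-x : ℤ) : ZMod n)) = (α g)⁻¹ := by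
    rw [coprodChar_apply, AddChar.map_zero_eq_one, one_mul, hψx, zpow_neg, hx]
  have antipode_pow :
      ((antipode k : Module.End k H) ^ 2) ^ Fintype.card (ZMod 2 × ZMod n) = 1 := by
    rw [Fintype.card_prod, ZMod.card, ZMod.card, ← pow_mul, ← mul_assoc]
    exact hS
  have mulRight_pow : LinearMap.mulRight k g ^ Fintype.card (ZMod n) = 1 := by
    rw [ZMod.card, LinearMap.pow_mulRight, hgn, LinearMap.mulRight_one, Module.End.one_eq_id]
  rw [← (Equiv.prodAssoc (ZMod 2) (ZMod n) (ZMod n)).iSup_comp]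
  exact mem_iSup_range_mapIncl_jointEigenspace hχ hψ antipode_pow mulRight_pow
    (antipode_sq_commute_mulRight hgl) (c := ((0, ((-x : ℤ) : ZMod n)), (x : ZMod n)))
    (by rw [hΛ.map_antipode_sq_comul hg hΛα, hχx])
    (by rw [map_mulRight_comul hgl, hΛα, map_smul, hψx, hx])

end Main

/-- Lemma 4.1. Let `H` be a Hopf algebra of odd index `n` over an
algebraically closed field of characteristic `0`, `ω` a primitive `n`-th root of unity,
`g` and `α` the distinguished group-like elements of `H` and `H*`, and `x` an integer with
`α(g) = ω^x`. If `Λ` is a left integral of `H`, then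
`Δ(Λ) ∈ Σ_{𝐚 ∈ ℤ/2 × ℤ/n × ℤ/n} H^ω_𝐚 ⊗ H^ω_{−𝐚+(0,−x,x)}`. -/
theorem stmt11 (k : Type*) [Field k] [IsAlgClosed k] [CharZero k]
    (n : ℕ) (hn : Odd n)
    (H : Type*) [Ring H] [HopfAlgebra k H] [FiniteDimensional k H]
    (g : H) (hg : IsDistinguishedGroupLike k g) (hidx : IsHopfIndex k g n)
    (α : H →ₐ[k] k) (hα : IsDistinguishedGroupLikeDual k α)
    (ω : k) (hω : IsPrimitiveRoot ω n)
    (x : ℤ) (hx : α g = ω ^ x)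
    (Λ : H) (hΛ : IsLeftIntegral k Λ) :
    Coalgebra.comul (R := k) Λ ∈
      ⨆ t : ZMod 2 × ZMod n × ZMod n,
        LinearMap.range (TensorProduct.mapIncl (hopfEigenspace g ω t)
          (hopfEigenspace g ω
            (-t + ((0 : ZMod 2), ((-x : ℤ) : ZMod n), ((x : ℤ) : ZMod n))))) := by
  exact stmt11_general k n hn H g hg hidx.2.1 hidx.2.2.1 α hα ω hω x hx Λ hΛ
end

section
/- Let H be a non-semisimple Hopf algebra over k of odd index n and ω ∈ k a primitive n-th root of unity. Then for every j ∈ Z_n, Σ_{(a,i) ∈ Z_2 × Z_n} (−1)^a ω^{−i} · dim H^ω_{a,i,j} = 0 in k. -/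
open scoped TensorProduct

/-!
Fix `v : H`. The functional `p ↦ tr (x ↦ p(x₁) S²(x₂) v)` on the dual of `H` is evaluation at some
`L : H`. Cyclicity of the trace shows that `L` is a left integral, and `p = ε` gives
`ε(L) = tr (x ↦ S²(x) v)`. If `H` is not semisimple, then `ε(L) = 0` by Maschke's theorem, so this
trace vanishes for every `v`. The opposite Hopf algebra has antipode `S⁻¹`, hence also
`tr (x ↦ S⁻²(x) v) = 0`. When right multiplication by `v` is the projection onto an eigenspace `W`
of right multiplication by `g`, this trace is the sum over the eigenvalues `χ` of `S²` of
`χ⁻¹ dim (ker (S² - χ) ∩ W)`.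
-/

open Coalgebra HopfAlgebra MulOpposite

section LeftIntegral

variable {R A : Type*} [CommSemiring R] [Semiring A] [HopfAlgebra R A]

variable (R A) in
/-- The algebra map `h ↦ h₁ ⊗ S(h₂)` into the enveloping algebra; pulling back an `A`-bimodule
along it gives the adjoint action. -/
noncomputable def comulAntipode : A →ₐ[R] A ⊗[R] Aᵐᵒᵖ :=
  (Algebra.TensorProduct.map (AlgHom.id R A) (antipodeAlgHomOp R A)).comp
    (Bialgebra.comulAlgHom R A)

lemma comulAntipode_eq_sum (h : A) {ι : Type*} (r : Repr R h ι) :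
    comulAntipode R A h = ∑ i ∈ r.index, r.left i ⊗ₜ[R] op (antipode R (r.right i)) := by
  simp [comulAntipode, ← r.eq]

-- With Sweedler indices, `h₁ ⊗ S(h₂) h₃ = h ⊗ 1`.
lemma sum_one_tmul_op_mul_comulAntipode (h : A) :
    ∑ i ∈ (ℛ R h).index, (1 ⊗ₜ[R] op ((ℛ R h).right i)) * comulAntipode R A ((ℛ R h).left i) =
      h ⊗ₜ[R] 1 := by
  have coassoc := congr(((opLinearEquiv R).toLinearMap ∘ₗ LinearMap.mul' R A ∘ₗ
    (antipode R).rTensor A).lTensor A $(sum_tmul_tmul_eq (ℛ R h)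
      (fun i => ℛ R ((ℛ R h).left i)) (fun i => ℛ R ((ℛ R h).right i))))
  simp only [map_sum, LinearMap.lTensor_tmul, LinearMap.comp_apply, LinearMap.rTensor_tmul,
    LinearMap.mul'_apply, LinearEquiv.coe_coe, coe_opLinearEquiv, ← TensorProduct.tmul_sum,
    ← Finset.op_sum, sum_antipode_mul_eq_smul] at coassoc
  simp only [comulAntipode_eq_sum _ (ℛ R _), Finset.mul_sum, Algebra.TensorProduct.tmul_mul_tmul,
    one_mul, ← op_mul]
  rw [coassoc]
  have counit := congr((Algebra.linearMap R Aᵐᵒᵖ).lTensor A $(sum_tmul_counit_eq (ℛ R h)))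
  simpa only [map_sum, LinearMap.lTensor_tmul, Algebra.linearMap_apply,
    Algebra.algebraMap_eq_smul_one, one_smul, op_smul, op_one] using counit

namespace IsLeftIntegral

lemma tmul_one_mul_comulAntipode {L : A} (hL : IsLeftIntegral R L) (h : A) :
    (h ⊗ₜ[R] 1) * comulAntipode R A L = (1 ⊗ₜ[R] op h) * comulAntipode R A L := by
  rw [← sum_one_tmul_op_mul_comulAntipode, Finset.sum_mul]
  simp only [mul_assoc, ← map_mul, hL _, map_smul, mul_smul_comm, ← smul_mul_assoc,
    ← TensorProduct.tmul_smul, ← Finset.sum_mul, ← TensorProduct.tmul_sum, ← op_smul,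
    ← Finset.op_sum, sum_counit_smul]

end IsLeftIntegral

variable {M N : Type*} [AddCommMonoid M] [Module R M] [Module A M] [IsScalarTower R A M]
  [AddCommMonoid N] [Module R N] [Module A N] [IsScalarTower R A N]

variable (R A M N) in
/-- The action of the enveloping algebra on linear maps between two modules,
`(a ⊗ b) • f = (x ↦ a • f (b • x))`. -/
noncomputable def envelopingHomAction : A ⊗[R] Aᵐᵒᵖ →ₐ[R] Module.End R (M →ₗ[R] N) :=
  Algebra.TensorProduct.lift (Algebra.lsmul R R (M →ₗ[R] N))
    (AlgHom.ofLinearMap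
      ((LinearMap.llcomp R M M N).flip ∘ₗ (Algebra.lsmul R R M).toLinearMap ∘ₗ
        (opLinearEquiv R).symm.toLinearMap)
      (by ext; simp) (fun a b => by ext; simp))
    (fun a b => by ext; simp)

@[simp]
lemma envelopingHomAction_tmul_apply (a b : A) (f : M →ₗ[R] N) (x : M) :
    envelopingHomAction R A M N (a ⊗ₜ op b) f x = a • f (b • x) := by
  rfl

/-- The average `x ↦ L₁ • f (S(L₂) • x)` of a linear map `f` over a left integral `L`. -/
noncomputable def IsLeftIntegral.average {L : A} (hL : IsLeftIntegral R L) (f : M →ₗ[R] N) :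
    M →ₗ[A] N where
  __ := envelopingHomAction R A M N (comulAntipode R A L) f
  map_smul' h x := by
    have hcomm := congr(envelopingHomAction R A M N $(hL.tmul_one_mul_comulAntipode h) f x)
    simpa [← op_one] using hcomm.symm

lemma IsLeftIntegral.average_apply {L : A} (hL : IsLeftIntegral R L) {f : M →ₗ[R] N} {x : M}
    (hf : ∀ a : A, f (a • x) = a • f x) : hL.average f x = counit (R := R) L • f x := by
  change envelopingHomAction R A M N (comulAntipode R A L) f x = _
  simp [comulAntipode_eq_sum L (ℛ R L), LinearMap.sum_apply, hf, ← mul_smul, ← Finset.sum_smul,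
    sum_mul_antipode_eq_smul]

end LeftIntegral

theorem IsLeftIntegral.isSemisimpleModule {k H M : Type*} [Field k] [Ring H] [HopfAlgebra k H]
    [AddCommGroup M] [Module k M] [Module H M] [IsScalarTower k H M]
    {L : H} (hL : IsLeftIntegral k L) (hε : counit (R := k) L ≠ 0) : IsSemisimpleModule H M where
  exists_isCompl N := by
    obtain ⟨q, hq⟩ : ∃ q : M →ₗ[k] N, ∀ y : N, q y = y := by
      obtain ⟨q, hq⟩ := (N.restrictScalars k).subtype.exists_leftInverse_of_injective
        (Submodule.ker_subtype _)
      exact ⟨q, fun y => congr($hq y)⟩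
    refine ⟨_, LinearMap.isCompl_of_proj (f := hL.average ((counit (R := k) L)⁻¹ • q)) fun y => ?_⟩
    have hlin (a : H) : q (a • (y : M)) = a • q y := by rw [← Submodule.coe_smul, hq, hq]
    rw [hL.average_apply fun a => ?_, LinearMap.smul_apply, smul_inv_smul₀ hε, hq]
    rw [LinearMap.smul_apply, LinearMap.smul_apply, hlin, smul_algebra_smul_comm]

section Trace

variable {R A : Type*} [CommRing R] [Ring A] [HopfAlgebra R A]

/-- The linear map `a ⊗ b ↦ p(a) S(b)` on the enveloping algebra. -/
noncomputable def evalSmulAntipode (p : Module.Dual R A) : A ⊗[R] Aᵐᵒᵖ →ₗ[R] A :=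
  TensorProduct.lid R A ∘ₗ
    TensorProduct.map p (antipode R ∘ₗ (opLinearEquiv R).symm.toLinearMap)

@[simp]
lemma evalSmulAntipode_tmul (p : Module.Dual R A) (a b : A) :
    evalSmulAntipode p (a ⊗ₜ op b) = p a • antipode R b := by
  simp [evalSmulAntipode]

lemma evalSmulAntipode_comp_mulLeft (p : Module.Dual R A) (h : A) (t : A ⊗[R] Aᵐᵒᵖ) :
    evalSmulAntipode (p ∘ₗ LinearMap.mulLeft R h) t = evalSmulAntipode p ((h ⊗ₜ[R] 1) * t) := by
  induction t with
  | zero => simp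
  | tmul a b => simp [evalSmulAntipode]
  | add _ _ h₁ h₂ => simp only [mul_add, map_add, h₁, h₂]

lemma evalSmulAntipode_one_tmul_mul (p : Module.Dual R A) (h : A) (t : A ⊗[R] Aᵐᵒᵖ) :
    evalSmulAntipode p ((1 ⊗ₜ[R] op h) * t) = antipode R h * evalSmulAntipode p t := by
  induction t with
  | zero => simp
  | tmul a b => simp [evalSmulAntipode, antipode_mul_antidistrib]
  | add _ _ h₁ h₂ => simp only [mul_add, map_add, h₁, h₂]

/-- The convolution product `x ↦ p(x₁) S²(x₂)` of the functional `p` and `S²`. -/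
noncomputable def convSqAntipode (p : Module.Dual R A) : Module.End R A :=
  evalSmulAntipode p ∘ₗ (comulAntipode R A).toLinearMap

lemma convSqAntipode_counit : convSqAntipode (counit (R := R) (A := A)) = antipode R ^ 2 := by
  ext x
  simp only [convSqAntipode, LinearMap.comp_apply, AlgHom.toLinearMap_apply,
    comulAntipode_eq_sum x (ℛ R x), map_sum, evalSmulAntipode_tmul, ← map_smul, pow_two,
    Module.End.mul_apply]
  simp only [← map_sum, sum_counit_smul]

lemma convSqAntipode_comp_mulLeft (p : Module.Dual R A) (h : A) :
    convSqAntipode (p ∘ₗ LinearMap.mulLeft R h) = ∑ i ∈ (ℛ R h).index,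
      LinearMap.mulLeft R (antipode R ((ℛ R h).right i)) * convSqAntipode p *
        LinearMap.mulLeft R ((ℛ R h).left i) := by
  ext x
  simp only [convSqAntipode, LinearMap.comp_apply, AlgHom.toLinearMap_apply,
    evalSmulAntipode_comp_mulLeft, LinearMap.sum_apply, Module.End.mul_apply,
    LinearMap.mulLeft_apply, map_mul]
  rw [← sum_one_tmul_op_mul_comulAntipode, Finset.sum_mul, map_sum]
  simp only [mul_assoc, evalSmulAntipode_one_tmul_mul]

lemma trace_mulRight_mul_convSqAntipode_comp_mulLeft (p : Module.Dual R A) (v h : A) :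
    LinearMap.trace R A
        (LinearMap.mulRight R v * convSqAntipode (p ∘ₗ LinearMap.mulLeft R h)) =
      counit (R := R) h * LinearMap.trace R A (LinearMap.mulRight R v * convSqAntipode p) := by
  have hcyc (a b : A) : LinearMap.trace R A (LinearMap.mulRight R v *
        (LinearMap.mulLeft R b * convSqAntipode p * LinearMap.mulLeft R a)) =
      LinearMap.trace R A (Algebra.lmul R A (a * b) *
        (LinearMap.mulRight R v * convSqAntipode p)) := by
    have hcomm : Commute (LinearMap.mulRight R v) (LinearMap.mulLeft R b) :=
      (LinearMap.commute_mulLeft_right b v).symm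
    rw [mul_assoc, hcomm.left_comm, ← mul_assoc (LinearMap.mulRight R v), ← mul_assoc,
      LinearMap.trace_mul_comm, map_mul (Algebra.lmul R A), ← mul_assoc]
    rfl
  rw [convSqAntipode_comp_mulLeft, Finset.mul_sum, map_sum]
  simp only [hcyc]
  rw [← map_sum, ← Finset.sum_mul, ← map_sum, sum_mul_antipode_eq_smul, map_smul, map_one,
    smul_mul_assoc, one_mul, map_smul, smul_eq_mul]

theorem exists_isLeftIntegral_counit_eq_trace [Module.Free R A] [Module.Finite R A] (v : A) :
    ∃ L : A, IsLeftIntegral R L ∧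
      counit (R := R) L = LinearMap.trace R A (LinearMap.mulRight R v * antipode R ^ 2) := by
  let τ : Module.Dual R (Module.Dual R A) :=
    { toFun := fun p => LinearMap.trace R A (LinearMap.mulRight R v * convSqAntipode p)
      map_add' := fun p q => by
        simp [convSqAntipode, evalSmulAntipode, TensorProduct.map_add_left, LinearMap.comp_add,
          LinearMap.add_comp, mul_add]
      map_smul' := fun r p => by
        simp [convSqAntipode, evalSmulAntipode, TensorProduct.map_smul_left, LinearMap.comp_smul,
          LinearMap.smul_comp] }
  -- `L` is the element of `A` that represents `τ` under `A ≃ A**`.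
  obtain ⟨L, hL⟩ := (Module.evalEquiv R A).surjective τ
  have hp (p : Module.Dual R A) :
      p L = LinearMap.trace R A (LinearMap.mulRight R v * convSqAntipode p) := congr($hL p)
  refine ⟨L, fun h => Module.eval_apply_injective R (LinearMap.ext fun p => ?_), ?_⟩
  · have hmul := hp (p ∘ₗ LinearMap.mulLeft R h)
    rw [trace_mulRight_mul_convSqAntipode_comp_mulLeft, ← hp] at hmul
    simpa using hmul
  · rw [hp, convSqAntipode_counit]

end Trace

theorem trace_mulRight_mul_sq_antipode {k H : Type*} [Field k] [Ring H] [HopfAlgebra k H]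
    [FiniteDimensional k H] (hss : ¬ IsSemisimpleRing H) (v : H) :
    LinearMap.trace k H (LinearMap.mulRight k v * antipode k ^ 2) = 0 := by
  obtain ⟨L, hL, hε⟩ := exists_isLeftIntegral_counit_eq_trace (R := k) v
  by_contra h
  exact hss (hL.isSemisimpleModule (hε ▸ h))

section Opposite

variable {R A : Type*} [CommSemiring R] [Semiring A]

/-- The opposite bialgebra, with the coalgebra structure of `A`. -/
noncomputable instance [Bialgebra R A] : Bialgebra R Aᵐᵒᵖ :=
  .mk' R Aᵐᵒᵖ (by simp [counit_def]) (by simp [counit_def, mul_comm])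
    (by simp [comul_def, Algebra.TensorProduct.one_def])
    (fun {a b} => by
      simp only [comul_def, LinearMap.comp_apply, LinearEquiv.coe_coe, coe_opLinearEquiv_symm,
        unop_mul, Bialgebra.comul_mul, ← (ℛ R (unop a)).eq, ← (ℛ R (unop b)).eq]
      simp [Finset.sum_mul_sum, Finset.sum_comm (s := (ℛ R (unop a)).index)])

section InverseAntipode

variable [HopfAlgebra R A] {T : Module.End R A}

lemma sum_right_mul_inverse_antipode_left (hTS : T * antipode R = 1) (hST : antipode R * T = 1)
    {a : A} {ι : Type*} (r : Repr R a ι) :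
    ∑ i ∈ r.index, r.right i * T (r.left i) = counit (R := R) a • 1 := by
  have hinj : Function.Injective (antipode R (A := A)) :=
    Function.LeftInverse.injective (g := T) fun x => congr($hTS x)
  have hST' (x : A) : antipode R (T x) = x := congr($hST x)
  refine hinj ?_
  simp only [map_sum, antipode_mul_antidistrib, hST', sum_mul_antipode_eq_smul, map_smul,
    antipode_one]

lemma sum_inverse_antipode_right_mul_left (hTS : T * antipode R = 1) (hST : antipode R * T = 1)
    {a : A} {ι : Type*} (r : Repr R a ι) :
    ∑ i ∈ r.index, T (r.right i) * r.left i = counit (R := R) a • 1 := by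
  have hinj : Function.Injective (antipode R (A := A)) :=
    Function.LeftInverse.injective (g := T) fun x => congr($hTS x)
  have hST' (x : A) : antipode R (T x) = x := congr($hST x)
  refine hinj ?_
  simp only [map_sum, antipode_mul_antidistrib, hST', sum_antipode_mul_eq_smul, map_smul,
    antipode_one]

/-- The opposite Hopf algebra of a Hopf algebra whose antipode has the two-sided inverse `T`;
its antipode is `T`. -/
noncomputable abbrev oppositeHopfAlgebra (hTS : T * antipode R = 1) (hST : antipode R * T = 1) :
    HopfAlgebra R Aᵐᵒᵖ where
  antipode := (opLinearEquiv R).conj T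
  mul_antipode_rTensor_comul := by
    ext a
    simp [comul_def, counit_def, ← (ℛ R (unop a)).eq, ← op_mul, ← Finset.op_sum,
      sum_right_mul_inverse_antipode_left hTS hST, Algebra.algebraMap_eq_smul_one]
  mul_antipode_lTensor_comul := by
    ext a
    simp [comul_def, counit_def, ← (ℛ R (unop a)).eq, ← op_mul, ← Finset.op_sum,
      sum_inverse_antipode_right_mul_left hTS hST, Algebra.algebraMap_eq_smul_one]

end InverseAntipode

end Opposite

theorem trace_mulRight_mul_sq_inverse_antipode {k H : Type*} [Field k] [Ring H] [HopfAlgebra k H]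
    [FiniteDimensional k H] (hss : ¬ IsSemisimpleRing H) {T : Module.End k H}
    (hTS : T * antipode k = 1) (hST : antipode k * T = 1) (v : H) :
    LinearMap.trace k H (LinearMap.mulRight k v * T ^ 2) = 0 := by
  have hop (w : H) : LinearMap.trace k H (LinearMap.mulLeft k w * T ^ 2) = 0 := by
    let := oppositeHopfAlgebra hTS hST
    have hconj : (LinearMap.mulRight k (op w) * antipode k ^ 2 : Module.End k Hᵐᵒᵖ) =
        (opLinearEquiv k).conj (LinearMap.mulLeft k w * T ^ 2) := by
      ext x
      rfl
    rw [← LinearMap.trace_conj' _ (opLinearEquiv k), ← hconj]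
    exact trace_mulRight_mul_sq_antipode (isSemisimpleRing_mulOpposite_iff.not.2 hss) _
  have hconj : LinearMap.mulRight k v = T * LinearMap.mulLeft k (antipode k v) * antipode k := by
    ext x
    have hTS' (x : H) : T (antipode k x) = x := congr($hTS x)
    simp [← antipode_mul_antidistrib, hTS']
  have hcancel : antipode k * T ^ 2 * T = T ^ 2 := by
    rw [pow_two, ← mul_assoc (antipode k), hST, one_mul]
  rw [hconj, mul_assoc, mul_assoc, LinearMap.trace_mul_comm, mul_assoc, hcancel, hop]

section SpectralProjection

open Module.End Polynomial

variable {k V : Type*} [Field k] [AddCommGroup V] [Module k V] {s : Finset k}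
  {A B : Module.End k V} {χ : k}

lemma isProj_inf_mul {p q : Submodule k V} {P Q : Module.End k V}
    (hP : LinearMap.IsProj p P) (hQ : LinearMap.IsProj q Q) (h : Commute P Q) :
    LinearMap.IsProj (p ⊓ q) (P * Q) where
  map_mem x := ⟨hP.map_mem _, by rw [h.eq]; exact hQ.map_mem _⟩
  map_id x hx := by rw [Module.End.mul_apply, hQ.map_id x hx.2, hP.map_id x hx.1]

lemma aeval_nodal_nthRootsFinset {R : Type*} [Ring R] [Algebra k R] {a : R} {N : ℕ} [NeZero N]
    {ζ : k} (hζ : IsPrimitiveRoot ζ N) (ha : a ^ N = 1) :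
    aeval a (Lagrange.nodal (nthRootsFinset N (1 : k)) id) = 0 := by
  have hnodal : Lagrange.nodal (nthRootsFinset N (1 : k)) id = X ^ N - 1 :=
    (X_pow_sub_one_eq_prod (NeZero.pos N) hζ).symm
  rw [hnodal, map_sub, map_pow, aeval_X, map_one, ha, sub_self]

section DecidableEq

variable [DecidableEq k]

variable (s A χ) in
/-- The projection onto the `χ`-eigenspace of an operator `A` annihilated by `∏ ψ ∈ s, (X - ψ)`,
for `χ ∈ s`: the value at `A` of the Lagrange basis polynomial which is `1` at `χ` and `0` at the
other points of `s`. -/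
noncomputable def spectralProjection : Module.End k V :=
  aeval A (Lagrange.basis s id χ)

lemma mul_spectralProjection (hA : aeval A (Lagrange.nodal s id) = 0) (hχ : χ ∈ s) :
    A * spectralProjection s A χ = χ • spectralProjection s A χ := by
  have hnodal : (X - C χ) * Lagrange.basis s id χ =
      C (Lagrange.nodalWeight s id χ) * Lagrange.nodal s id := by
    rw [Lagrange.basis_eq_prod_sub_inv_mul_nodal_div hχ, Lagrange.nodal_eq_mul_nodal_erase hχ,
      id_eq, mul_div_cancel_left₀ _ (X_sub_C_ne_zero χ), mul_left_comm]
  have haeval := congr(aeval A $hnodal)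
  rw [map_mul, map_mul, hA, mul_zero, map_sub, aeval_X, aeval_C, sub_mul, sub_eq_zero,
    ← Algebra.smul_def] at haeval
  exact haeval

lemma isProj_spectralProjection (hA : aeval A (Lagrange.nodal s id) = 0) (hχ : χ ∈ s) :
    LinearMap.IsProj (eigenspace A χ) (spectralProjection s A χ) where
  map_mem x := mem_eigenspace_iff.2 congr($(mul_spectralProjection hA hχ) x)
  map_id x hx := by
    have heval : (Lagrange.basis s id χ).eval χ = 1 :=
      Lagrange.eval_basis_self Function.injective_id.injOn hχ
    rw [spectralProjection, aeval_apply_of_mem_apply_eq_smul (mem_eigenspace_iff.1 hx), heval,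
      one_smul]

lemma sum_spectralProjection (hA : aeval A (Lagrange.nodal s id) = 0) :
    ∑ χ ∈ s, spectralProjection s A χ = 1 := by
  obtain rfl | hs := s.eq_empty_or_nonempty
  · simpa using hA.symm
  · simp only [spectralProjection, ← map_sum]
    rw [Lagrange.sum_basis Function.injective_id.injOn hs, map_one]

lemma commute_spectralProjection (h : Commute B A) : Commute B (spectralProjection s A χ) := by
  rw [spectralProjection, aeval_eq_sum_range]
  exact Commute.sum_right _ _ _ fun i _ => (h.pow_right i).smul_right _

end DecidableEq

theorem trace_mul_pow_eq_sum_finrank [FiniteDimensional k V] {W : Submodule k V}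
    {Q : Module.End k V} (hQ : LinearMap.IsProj W Q) (hA : aeval A (Lagrange.nodal s id) = 0)
    (hQA : Commute Q A) (m : ℕ) :
    LinearMap.trace k V (Q * A ^ m) =
      ∑ χ ∈ s, χ ^ m * (Module.finrank k ↥(eigenspace A χ ⊓ W) : k) := by
  classical
  have hpow {χ : k} (hχ : χ ∈ s) :
      A ^ m * spectralProjection s A χ = χ ^ m • spectralProjection s A χ := by
    induction m with
    | zero => simp
    | succ m ih =>
      rw [pow_succ, mul_assoc, mul_spectralProjection hA hχ, mul_smul_comm, ih, smul_smul,
        pow_succ']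
  rw [← mul_one (Q * A ^ m), ← sum_spectralProjection hA, Finset.mul_sum, map_sum]
  refine Finset.sum_congr rfl fun χ hχ => ?_
  have hproj := isProj_inf_mul (isProj_spectralProjection hA hχ) hQ
    (commute_spectralProjection hQA).symm
  rw [mul_assoc, hpow hχ, mul_smul_comm, map_smul, smul_eq_mul, LinearMap.trace_mul_comm,
    hproj.trace]

end SpectralProjection

section PrimitiveRoots

variable {k : Type*} [Field k] {m n : ℕ} {ζ ω : k}

lemma isPrimitiveRoot_mul_of_coprime (hmn : m.Coprime n) (hζ : IsPrimitiveRoot ζ m)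
    (hω : IsPrimitiveRoot ω n) : IsPrimitiveRoot (ζ * ω) (m * n) := by
  rw [hζ.eq_orderOf, hω.eq_orderOf] at hmn ⊢
  rw [← (Commute.all ζ ω).orderOf_mul_eq_mul_orderOf_of_coprime hmn]
  exact IsPrimitiveRoot.orderOf _

lemma injective_pow_val_mul_pow_val [NeZero m] [NeZero n] (hmn : m.Coprime n)
    (hζ : IsPrimitiveRoot ζ m) (hω : IsPrimitiveRoot ω n) :
    Function.Injective fun t : ZMod m × ZMod n => ζ ^ t.1.val * ω ^ t.2.val := by
  rintro ⟨a, i⟩ ⟨b, j⟩ h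
  dsimp only at h
  have hpow : (ζ ^ n) ^ a.val = (ζ ^ n) ^ b.val := by
    have hn := congr($h ^ n)
    simpa only [mul_pow, pow_right_comm _ _ n, hω.pow_eq_one, one_pow, mul_one] using hn
  obtain rfl : a = b := ZMod.val_injective m
    ((hζ.pow_of_coprime n hmn.symm).pow_inj a.val_lt b.val_lt hpow)
  have hi := mul_left_cancel₀ (pow_ne_zero _ (hζ.ne_zero (NeZero.ne m))) h
  rw [ZMod.val_injective n (hω.pow_inj i.val_lt j.val_lt hi)]

lemma sum_zmod_prod_zmod_eq_sum_nthRootsFinset {M : Type*} [AddCommMonoid M]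
    [NeZero m] [NeZero n] (hmn : m.Coprime n)
    (hζ : IsPrimitiveRoot ζ m) (hω : IsPrimitiveRoot ω n) (f : k → M) :
    ∑ t : ZMod m × ZMod n, f (ζ ^ t.1.val * ω ^ t.2.val) =
      ∑ χ ∈ Polynomial.nthRootsFinset (m * n) 1, f χ := by
  have hinj := injective_pow_val_mul_pow_val hmn hζ hω
  classical
  have himage : Finset.univ.image (fun t : ZMod m × ZMod n => ζ ^ t.1.val * ω ^ t.2.val) =
      Polynomial.nthRootsFinset (m * n) (1 : k) := by
    refine Finset.eq_of_subset_of_card_le (Finset.image_subset_iff.2 fun t _ => ?_) ?_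
    · rw [Polynomial.mem_nthRootsFinset (NeZero.pos _), mul_pow, pow_right_comm, pow_mul,
        hζ.pow_eq_one, one_pow, one_pow, pow_right_comm, mul_comm m, pow_mul, hω.pow_eq_one,
        one_pow, one_pow, one_mul]
    · rw [Finset.card_image_of_injective _ hinj,
        (isPrimitiveRoot_mul_of_coprime hmn hζ hω).card_nthRootsFinset]
      simp
  rw [← himage, Finset.sum_image hinj.injOn]

end PrimitiveRoots

lemma aeval_mulRight {k H : Type*} [CommSemiring k] [Semiring H] [Algebra k H] (g : H)
    (p : Polynomial k) :
    Polynomial.aeval (LinearMap.mulRight k g) p = LinearMap.mulRight k (Polynomial.aeval g p) := by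
  ext x
  simp [Polynomial.aeval_eq_sum_range, LinearMap.sum_apply, LinearMap.pow_mulRight, Finset.mul_sum]

lemma commute_sq_antipode_mulRight {R A : Type*} [CommSemiring R] [Semiring A] [HopfAlgebra R A]
    {g : A} (hg : antipode R (antipode R g) = g) :
    Commute (antipode R (A := A) ^ 2 : Module.End R A) (LinearMap.mulRight R g) := by
  ext x
  simp [pow_two, antipode_mul_antidistrib, hg]

lemma IsGroupLike.antipode_antipode {R A : Type*} [CommRing R] [IsDomain R] [Ring A]
    [HopfAlgebra R A] [Module.IsTorsionFree R A] {g : A} (hg : IsGroupLike R g) :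
    antipode R (antipode R g) = g := by
  have hcounit : counit (R := R) g = 1 := by
    have h := congr(TensorProduct.lid R A $(rTensor_counit_comul (R := R) g))
    rw [hg.2] at h
    simp only [LinearMap.rTensor_tmul, TensorProduct.lid_tmul, one_smul] at h
    exact smul_left_injective R hg.1 (h.trans (one_smul R g).symm)
  exact IsGroupLikeElem.antipode_antipode ⟨hcounit, hg.2⟩

theorem sum_inv_mul_finrank_eigenspace_inf_eigenspace_eq_zero {k H : Type*} [Field k] [Ring H]
    [HopfAlgebra k H] [FiniteDimensional k H] (hss : ¬ IsSemisimpleRing H)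
    {N : ℕ} [NeZero N] {ζ : k} (hζ : IsPrimitiveRoot ζ N)
    (hS : (antipode k (A := H) : Module.End k H) ^ (2 * N) = 1)
    {g : H} (hg : antipode k (antipode k g) = g) {s : Finset k}
    (hgs : Polynomial.aeval g (Lagrange.nodal s id) = 0) {ψ : k} (hψ : ψ ∈ s) :
    ∑ χ ∈ Polynomial.nthRootsFinset N (1 : k), χ⁻¹ *
      (Module.finrank k ↥(Module.End.eigenspace (antipode k (A := H) ^ 2 : Module.End k H) χ ⊓
        Module.End.eigenspace (LinearMap.mulRight k g) ψ) : k) = 0 := by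
  classical
  have hproj : LinearMap.IsProj (Module.End.eigenspace (LinearMap.mulRight k g) ψ)
      (LinearMap.mulRight k (Polynomial.aeval g (Lagrange.basis s id ψ))) := by
    rw [← aeval_mulRight]
    refine isProj_spectralProjection ?_ hψ
    rw [aeval_mulRight, hgs, LinearMap.mulRight_zero_eq_zero]
  have hcomm : Commute (LinearMap.mulRight k (Polynomial.aeval g (Lagrange.basis s id ψ)))
      (antipode k (A := H) ^ 2) := by
    rw [← aeval_mulRight]
    exact (commute_spectralProjection (commute_sq_antipode_mulRight hg)).symm
  have hN : 2 * N - 1 + 1 = 2 * N := Nat.sub_add_cancel (by have := NeZero.pos N; lia)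
  have htrace := trace_mulRight_mul_sq_inverse_antipode hss (T := antipode k ^ (2 * N - 1))
    (by rw [← pow_succ, hN, hS]) (by rw [← pow_succ', hN, hS])
    (Polynomial.aeval g (Lagrange.basis s id ψ))
  rw [pow_right_comm, trace_mul_pow_eq_sum_finrank hproj
    (aeval_nodal_nthRootsFinset hζ (by rw [← pow_mul, hS])) hcomm] at htrace
  rw [← htrace]
  refine Finset.sum_congr rfl fun χ hχ => ?_
  have hinv : χ ^ (2 * N - 1) * χ = 1 := by
    rw [← pow_succ, hN, mul_comm, pow_mul, (Polynomial.mem_nthRootsFinset (NeZero.pos N) _).1 hχ,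
      one_pow]
  rw [eq_inv_of_mul_eq_one_left hinv]

theorem stmt13_general (k : Type*) [Field k] (hk : ringChar k ≠ 2)
    (n : ℕ) (hn : Odd n) [NeZero n]
    (H : Type*) [Ring H] [HopfAlgebra k H] [FiniteDimensional k H]
    (hss : ¬ IsSemisimpleRing H)
    (hS : (antipode k (A := H) : Module.End k H) ^ (4 * n) = 1)
    (g : H) (hg : antipode k (antipode k g) = g) (hgn : g ^ n = 1)
    (ω : k) (hω : IsPrimitiveRoot ω n) :
    ∀ j : ZMod n,
      ∑ t : ZMod 2 × ZMod n,
        (-1 : k) ^ t.1.val * (ω ^ t.2.val)⁻¹ *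
          (Module.finrank k (hopfEigenspace g ω (t.1, t.2, j)) : k) = 0 := by
  intro j
  have hneg : IsPrimitiveRoot (-1 : k) 2 := .neg_one (ringChar k) hk
  have hroot : IsPrimitiveRoot (-1 * ω) (2 * n) :=
    isPrimitiveRoot_mul_of_coprime hn.coprime_two_left hneg hω
  have hS' : (antipode k (A := H) : Module.End k H) ^ (2 * (2 * n)) = 1 := by
    rw [← mul_assoc]
    exact hS
  have hj : ω ^ j.val ∈ Polynomial.nthRootsFinset n (1 : k) := by
    rw [Polynomial.mem_nthRootsFinset (NeZero.pos n), pow_right_comm, hω.pow_eq_one, one_pow]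
  rw [← sum_inv_mul_finrank_eigenspace_inf_eigenspace_eq_zero hss hroot hS' hg
    (aeval_nodal_nthRootsFinset hω hgn) hj,
    ← sum_zmod_prod_zmod_eq_sum_nthRootsFinset hn.coprime_two_left hneg hω]
  refine Finset.sum_congr rfl fun t _ => ?_
  rw [mul_inv, ← inv_pow (-1 : k), inv_neg_one]
  rfl

/-- Lemma 4.3. Let `H` be a non-semisimple Hopf algebra of odd index `n`
over an algebraically closed field of characteristic `0` and `ω` a primitive `n`-th root of
unity. Then for every `j ∈ ℤ/n`,
`Σ_{(a,i) ∈ ℤ/2 × ℤ/n} (−1)^a ω^{−i} dim H^ω_{a,i,j} = 0` in `k`. -/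
theorem stmt13 (k : Type*) [Field k] [IsAlgClosed k] [CharZero k]
    (n : ℕ) (hn : Odd n) [NeZero n]
    (H : Type*) [Ring H] [HopfAlgebra k H] [FiniteDimensional k H]
    (hss : ¬ IsSemisimpleRing H)
    (g : H) (hg : IsDistinguishedGroupLike k g) (hidx : IsHopfIndex k g n)
    (ω : k) (hω : IsPrimitiveRoot ω n) :
    ∀ j : ZMod n,
      ∑ t : ZMod 2 × ZMod n,
        (-1 : k) ^ t.1.val * (ω ^ t.2.val)⁻¹ *
          (Module.finrank k (hopfEigenspace g ω (t.1, t.2, j)) : k) = 0 := by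
  exact stmt13_general k (by simp [ringChar.eq_zero]) n hn H hss hidx.2.1 g hg.1.antipode_antipode
    hidx.2.2.1 ω hω
end
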